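/- arXiv:2101.04707 — 3 statements merged into one kernel-verified Lean document; each statement's English description precedes it below -/
import Mathlib

section
/- Let (K,v) be a valued field of characteristic p > 0, let (K(η)|K,v) be a purely inseparable extension and (K(θ)|K,v) an Artin-Schreier extension. Then K(η,θ)|K(θ) is purely inseparable, so the extension of v from K(θ) to K(η,θ) is unique. If v(η−θ) > v(θ−c) for all c ∈ K, then the extension of v from K to K(θ) is unique. If in addition (K(η)|K,v) is immediate, then (K(θ)|K,v) is immediate with defect p. -/
/-!
Values are written multiplicatively, so the hypothesis reads `v (η - θ) < v (θ - c)` for all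
`c ∈ K`. Since `η ^ q ∈ K` and `θ ^ q ∈ θ + K` for a power `q` of `p`, the value `v (η - θ) ^ q` is
itself one of the `v (θ - c)`, and this forces `v (θ - c) > 1` for every `c` (`one_lt_of_approx`).

*Uniqueness.* Let `L = K(θ)` and let `τ` be the automorphism `θ ↦ θ + 1`, which generates the
Galois group. Let `w` be a valuation on `L` over `v|K`; then also `w (θ - c) > 1` for all `c`. No
`x ∈ L` can have a value strictly above that of all its other conjugates: its trace `t ∈ K` would
satisfy `w t = w x`, whereas `∑ i * τ ^ i x = -t (θ - c)` for some `c ∈ K` by additive Hilbert 90,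
and the left-hand side has value less than `w x` (`not_dominant`). If `w ∘ τ ≠ w` at `x`, the
product of the conjugates of `x` of maximal value is such an element, so `w ∘ τ = w` (`val_aut`).
Thus `w x ^ p = w (N x)`, and `w` is determined by `v|K`. No conjugacy theorem for extensions of
valuations is needed.

*Immediacy.* From `v (η - c) = v (θ - c)` and the immediacy of `K(η)` it follows that the values
`v (θ - c)` have no minimum. Suppose `x ∈ L` is nonzero and `v (x - c) ≥ v x` for all `c ∈ K`. If
`v x ∉ vK`, then `v x` has order `p` modulo `vK`, because `v x ^ p = v (N x)`. Otherwise `x` may be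
scaled to value `1`, and its residue has degree `p` over `Kv`. In both cases
`v c₀ ≤ v (∑ i < p, c i * x ^ i)` for all coefficients, so the constant coefficient of `θ` in the
basis `1, x, …, x ^ (p - 1)` attains the minimum of the `v (θ - c)`, a contradiction
(`exists_approx`). Hence every nonzero `x ∈ L` is approximated by some `c ∈ K` with
`v (x - c) < v x`, which is immediacy.
-/

namespace Statement13

/-- The subextension `(E|K,v)` (with `E` an intermediate field of a valued field `(Ω,v)`)
is *immediate*: the canonical embeddings `vK → vE` and `Kv → Ev` are surjective
(multiplicative notation). -/
def IsImmediate {K Ω : Type*} [Field K] [Field Ω] [Algebra K Ω]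
    {Γ : Type*} [LinearOrderedCommGroupWithZero Γ] (v : Valuation Ω Γ)
    (E : IntermediateField K Ω) : Prop :=
  (∀ x : E, ∃ c : K, v (algebraMap K Ω c) = v (x : Ω)) ∧
  (∀ x : E, v (x : Ω) ≤ 1 → ∃ c : K, v ((x : Ω) - algebraMap K Ω c) < 1)

/-- The extension of the valuation `v` from `K` to `F` is unique: there is exactly one
valuation ring of `F` lying over the valuation ring of the restriction of `v` to `K`,
namely that of `v`.  (Valuation subrings of `F` whose preimage in `K` is the valuation
ring of `v|K` correspond exactly to the extensions of `v|K` to `F`, up to equivalence.) -/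
def UniqueExtension (K F : Type*) [Field K] [Field F] [Algebra K F]
    {Γ : Type*} [LinearOrderedCommGroupWithZero Γ] (v : Valuation F Γ) : Prop :=
  ∀ R : ValuationSubring F,
    R.toSubring.comap (algebraMap K F) = (v.comap (algebraMap K F)).integer →
    R = v.valuationSubring

/-! ### The Galois group of an Artin–Schreier extension -/

open Polynomial in
lemma X_pow_sub_X_eq_prod (L : Type*) [Field L] (p : ℕ) [Fact p.Prime] [CharP L p] :
    (X ^ p - X : L[X]) = ∏ a : ZMod p, (X - C (ZMod.castHom (dvd_refl p) L a)) := by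
  have h1 : (X ^ p - X : (ZMod p)[X]) = ∏ a : ZMod p, (X - C a) := by
    have hs := FiniteField.splits_X_pow_card_sub_X p (K := ZMod p)
    have hr := FiniteField.roots_X_pow_card_sub_X (ZMod p)
    rw [ZMod.card] at hs hr
    rw [Algebra.algebraMap_self, Polynomial.map_id] at hs
    have hp : 1 < p := (Fact.out : p.Prime).one_lt
    have hm : (X ^ p - X : (ZMod p)[X]).Monic :=
      monic_X_pow_sub (by rw [degree_X]; exact_mod_cast hp)
    have := hs.eq_prod_roots_of_monic hm
    rw [hr] at this
    exact this
  have h2 := congrArg (Polynomial.map (ZMod.castHom (dvd_refl p) L)) h1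
  rw [Polynomial.map_prod] at h2
  simpa using h2

open Polynomial in
/-- The Galois group of an Artin–Schreier extension `L = K(θ)` is cyclic of order `p`, with
generator `θ ↦ θ + 1`. -/
lemma artinSchreier_exists_aut {K L : Type*} [Field K] [Field L] [Algebra K L]
    (p : ℕ) [Fact p.Prime] [CharP K p] (θ : L)
    (htop : IntermediateField.adjoin K {θ} = ⊤)
    (hnt : θ ∉ Set.range (algebraMap K L))
    (hAS : θ ^ p - θ ∈ Set.range (algebraMap K L)) :
    ∃ τ : L ≃ₐ[K] L, τ θ = θ + 1 ∧ τ ^ p = 1 ∧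
      (∀ x, τ x = x → x ∈ Set.range (algebraMap K L)) ∧ Module.finrank K L = p := by
  have hp : 1 < p := (Fact.out : p.Prime).one_lt
  have : CharP L p := charP_of_injective_algebraMap (algebraMap K L).injective p
  obtain ⟨d, hd⟩ := hAS
  set ι := ZMod.castHom (dvd_refl p) L with hι
  set P : K[X] := X ^ p - X - C d with hP
  have hPdeg : P = X ^ p - (X + C d) := by rw [hP]; ring
  have hPm : P.Monic := by
    rw [hPdeg]
    exact monic_X_pow_sub (by rw [degree_X_add_C]; exact_mod_cast hp)
  have hPθ : aeval θ P = 0 := by simp [hP, hd]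
  have hmap : P.map (algebraMap K L) = ∏ a : ZMod p, (X - C (θ + ι a)) := by
    have h := congrArg (fun f : L[X] ↦ f.comp (X - C θ)) (X_pow_sub_X_eq_prod L p)
    simp only [Polynomial.prod_comp, sub_comp, pow_comp, X_comp, C_comp] at h
    rw [sub_pow_char] at h
    have e : ∀ a : ZMod p, X - C (θ + ι a) = X - C θ - C (ι a) := fun a ↦ by
      rw [C_add]; ring
    simp only [e]
    rw [← h, hP]
    simp only [Polynomial.map_sub, Polynomial.map_pow, map_X, map_C, hd, C_sub, C_pow]
    ring
  have hroot : ∀ x : L, aeval x P = 0 → ∃ a : ZMod p, x = θ + ι a := by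
    intro x hx
    rw [← eval_map_algebraMap, hmap, eval_prod, Finset.prod_eq_zero_iff] at hx
    obtain ⟨a, -, ha⟩ := hx
    exact ⟨a, by simpa [sub_eq_zero] using ha⟩
  have hsplit : (P.map (algebraMap K L)).Splits := by
    rw [hmap]; exact Splits.prod fun a _ ↦ Splits.X_sub_C _
  have hint : IsIntegral K θ := ⟨P, hPm, by rw [← aeval_def]; exact hPθ⟩
  have hA : Algebra.adjoin K {θ} = ⊤ := by
    rw [← IntermediateField.adjoin_simple_toSubalgebra_of_isAlgebraic hint.isAlgebraic, htop]
    rfl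
  have hadj : Algebra.adjoin K (P.rootSet L) = ⊤ := by
    rw [eq_top_iff, ← hA]
    apply Algebra.adjoin_mono
    rw [Set.singleton_subset_iff, mem_rootSet]
    exact ⟨hPm.ne_zero, hPθ⟩
  have : IsSplittingField K L P := ⟨hsplit, hadj⟩
  have hsep : P.Separable := by
    have hder : derivative P = -1 := by
      simp [hP, derivative_X_pow]
    rw [Polynomial.Separable, hder]
    exact isCoprime_one_right.neg_right
  have : IsGalois K L := IsGalois.of_separable_splitting_field hsep
  have : FiniteDimensional K L := IsSplittingField.finiteDimensional L P
  have hconj : ∀ ρ : L ≃ₐ[K] L, ∃ a : ZMod p, ρ θ = θ + ι a := fun ρ ↦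
    hroot _ (by rw [← AlgEquiv.coe_toAlgHom, aeval_algHom_apply, hPθ, map_zero])
  have hext : ∀ ρ ρ' : L ≃ₐ[K] L, ρ θ = ρ' θ → ρ = ρ' := by
    intro ρ ρ' h
    have h1 : (ρ : L →ₐ[K] L) = ρ' := by
      refine AlgHom.ext_of_adjoin_eq_top hA ?_
      rintro x rfl
      exact h
    ext x
    exact DFunLike.congr_fun h1 x
  have hpow : ∀ (ρ : L ≃ₐ[K] L) (a : ZMod p), ρ θ = θ + ι a → ∀ n : ℕ,
      (ρ ^ n) θ = θ + ι (n * a) := by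
    intro ρ a ha n
    induction n with
    | zero => simp
    | succ n ih =>
      have hι : ρ (ι (n * a)) = ι (n * a) := by
        obtain ⟨m, hm⟩ := ZMod.natCast_zmod_surjective ((n : ZMod p) * a)
        rw [← hm, map_natCast, map_natCast]
      rw [pow_succ', AlgEquiv.mul_apply, ih, map_add, ha, hι, add_assoc, ← map_add]
      congr 2
      push_cast; ring
  have hmove : ∃ ρ : L ≃ₐ[K] L, ρ θ ≠ θ := by
    by_contra! hc
    exact hnt (IntermediateField.mem_bot.mp ((IsGalois.mem_bot_iff_fixed θ).mpr hc))
  obtain ⟨ρ, hρ⟩ := hmove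
  obtain ⟨a, ha⟩ := hconj ρ
  have ha0 : a ≠ 0 := by
    rintro rfl
    exact hρ (by simpa using ha)
  set τ := ρ ^ (a⁻¹).val with hτdef
  have hτ : τ θ = θ + ι 1 := by
    rw [hpow ρ a ha, ZMod.natCast_zmod_val, inv_mul_cancel₀ ha0]
  have hτp : τ ^ p = 1 := hext _ _ (by rw [hpow τ 1 hτ]; simp)
  have hgen : ∀ ρ : L ≃ₐ[K] L, ∃ n : ℕ, ρ = τ ^ n := by
    intro ρ
    obtain ⟨a, ha⟩ := hconj ρ
    refine ⟨a.val, hext _ _ ?_⟩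
    rw [hpow τ 1 hτ, ha, ZMod.natCast_zmod_val, mul_one]
  refine ⟨τ, by rw [hτ, map_one], hτp, fun x hx ↦ ?_, ?_⟩
  · refine IntermediateField.mem_bot.mp ((IsGalois.mem_bot_iff_fixed x).mpr fun ρ ↦ ?_)
    obtain ⟨n, rfl⟩ := hgen ρ
    induction n with
    | zero => rfl
    | succ n ih => rw [pow_succ, AlgEquiv.mul_apply, hx, ih]
  · rw [← IsGalois.card_aut_eq_finrank, ← orderOf_eq_card_of_forall_mem_zpowers (g := τ)]
    · refine orderOf_eq_prime hτp fun h ↦ ?_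
      rw [h, AlgEquiv.one_apply, map_one, left_eq_add] at hτ
      exact one_ne_zero hτ
    · intro ρ
      obtain ⟨n, rfl⟩ := hgen ρ
      exact Subgroup.npow_mem_zpowers τ n

/-! ### Approximation by a purely inseparable element -/

lemma frobenius_iterate {K Ω : Type*} [Field K] [Field Ω] [Algebra K Ω]
    (p : ℕ) [Fact p.Prime] [CharP K p] (θ : Ω)
    (hAS : θ ^ p - θ ∈ Set.range (algebraMap K Ω)) (n : ℕ) :
    ∃ b : K, θ ^ p ^ n = θ + algebraMap K Ω b := by
  have : CharP Ω p := charP_of_injective_algebraMap (algebraMap K Ω).injective p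
  obtain ⟨d, hd⟩ := hAS
  induction n with
  | zero => exact ⟨0, by simp⟩
  | succ n ih =>
    obtain ⟨b, hb⟩ := ih
    refine ⟨d + b ^ p, ?_⟩
    rw [pow_succ, pow_mul, hb, add_pow_char, map_add, map_pow, hd]
    ring

/-- Since `η ^ q ∈ K` and `θ ^ q ∈ θ + K` for a power `q` of `p`, the value `v (η - θ) ^ q` is
of the form `v (θ - c)`. By hypothesis it is therefore larger than `v (η - θ)`, which is impossible
if `v (η - θ) ≤ 1`, and hence if `v (θ - c) ≤ 1` for some `c`. -/
lemma one_lt_of_approx {K Ω : Type*} [Field K] [Field Ω] [Algebra K Ω]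
    {Γ : Type*} [LinearOrderedCommGroupWithZero Γ] (v : Valuation Ω Γ)
    (p : ℕ) [Fact p.Prime] [CharP K p] (η θ : Ω)
    (hAS : θ ^ p - θ ∈ Set.range (algebraMap K Ω)) (n : ℕ)
    (hη : η ^ p ^ n ∈ Set.range (algebraMap K Ω))
    (h : ∀ c : K, v (η - θ) < v (θ - algebraMap K Ω c)) (c : K) :
    1 < v (θ - algebraMap K Ω c) := by
  have : CharP Ω p := charP_of_injective_algebraMap (algebraMap K Ω).injective p
  obtain ⟨b, hb⟩ := frobenius_iterate p θ hAS n
  obtain ⟨a, ha⟩ := hη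
  have h1 : v (η - θ) ^ p ^ n = v (θ - algebraMap K Ω (a - b)) := by
    rw [← map_pow, sub_pow_char_pow, ← ha, hb, Valuation.map_sub_swap, (algebraMap K Ω).map_sub]
    congr 1; ring
  by_contra hc
  have h2 : v (η - θ) ≤ 1 := (h c).le.trans (not_lt.mp hc)
  have h3 := h (a - b)
  rw [← h1] at h3
  exact absurd h3 (not_lt.mpr (pow_le_of_le_one zero_le h2
    (pow_ne_zero _ (Fact.out : p.Prime).ne_zero)))

/-! ### Unique extension of the valuation -/

/-- Membership of `x` in a valuation ring is detected by `x ^ p ^ n`, which lies in `F` for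
large `n`. -/
lemma isPurelyInseparable_uniqueExtension {F E : Type*} [Field F] [Field E] [Algebra F E]
    [IsPurelyInseparable F E] {Γ : Type*} [LinearOrderedCommGroupWithZero Γ]
    (v : Valuation E Γ) (p : ℕ) [Fact p.Prime] [CharP F p] : UniqueExtension F E v := by
  intro R hR
  ext x
  obtain ⟨n, y, hy⟩ := IsPurelyInseparable.pow_mem F p x
  have hq : p ^ n ≠ 0 := pow_ne_zero _ (Fact.out : p.Prime).ne_zero
  have h1 : algebraMap F E y ∈ R ↔ v (algebraMap F E y) ≤ 1 := by
    have := SetLike.ext_iff.mp hR y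
    simpa [Subring.mem_comap, Valuation.mem_integer_iff] using this
  rw [hy, map_pow, ← ValuationSubring.valuation_le_one_iff, map_pow, pow_le_one_iff hq,
    pow_le_one_iff hq, ValuationSubring.valuation_le_one_iff] at h1
  exact h1

section Cyclic

variable {K L : Type*} [Field K] [Field L] [Algebra K L] {p : ℕ} {τ : L ≃ₐ[K] L}

lemma range_of_orbit_sum (hτp : τ ^ p = 1)
    (hfix : ∀ x, τ x = x → x ∈ Set.range (algebraMap K L)) (x : L) :
    ∑ i ∈ Finset.range p, (τ ^ i) x ∈ Set.range (algebraMap K L) := by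
  apply hfix
  have h := Finset.sum_range_succ' (fun i ↦ (τ ^ i) x) p
  rw [Finset.sum_range_succ, hτp, pow_zero, add_left_inj] at h
  rw [map_sum, h]
  simp only [pow_succ', AlgEquiv.mul_apply]

lemma range_of_orbit_prod (hτp : τ ^ p = 1)
    (hfix : ∀ x, τ x = x → x ∈ Set.range (algebraMap K L)) (x : L) :
    ∏ i ∈ Finset.range p, (τ ^ i) x ∈ Set.range (algebraMap K L) := by
  by_cases hx : x = 0
  · subst hx
    rcases Nat.eq_zero_or_pos p with rfl | hp
    · exact ⟨1, by simp⟩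
    · exact ⟨0, by simp [hp.ne']⟩
  apply hfix
  have h := Finset.prod_range_succ' (fun i ↦ (τ ^ i) x) p
  rw [Finset.prod_range_succ, hτp, pow_zero] at h
  rw [map_prod, mul_right_cancel₀ (by simpa using hx) h]
  simp only [pow_succ', AlgEquiv.mul_apply]

lemma pow_mod_apply (hτp : τ ^ p = 1) (n : ℕ) (x : L) : (τ ^ (n % p)) x = (τ ^ n) x := by
  conv_rhs => rw [← Nat.mod_add_div n p, pow_add, pow_mul, hτp, one_pow, mul_one]

/-- Additive Hilbert 90 made explicit: if the trace `t` of `x` is nonzero, then `∑ i * τ ^ i x` is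
`-t * (θ - c)` for some `c ∈ K`. -/
lemma exists_weighted_sum_eq [CharP L p] {θ : L} (hτ : τ θ = θ + 1) (hτp : τ ^ p = 1)
    (hfix : ∀ x, τ x = x → x ∈ Set.range (algebraMap K L)) (x : L)
    (hx : ∑ i ∈ Finset.range p, (τ ^ i) x ≠ 0) :
    ∃ c : K, ∑ i ∈ Finset.range p, (i : L) * (τ ^ i) x =
      -((∑ i ∈ Finset.range p, (τ ^ i) x) * (θ - algebraMap K L c)) := by
  obtain ⟨t, ht⟩ := range_of_orbit_sum hτp hfix x
  set z := ∑ i ∈ Finset.range p, (i : L) * (τ ^ i) x with hz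
  have h := Finset.sum_range_succ' (fun i ↦ (i : L) * (τ ^ i) x) p
  rw [Finset.sum_range_succ, CharP.cast_eq_zero, zero_mul, add_zero, Nat.cast_zero, zero_mul,
    add_zero, ← hz] at h
  have h2 : τ z = z - algebraMap K L t := by
    have h3 : τ (algebraMap K L t) = algebraMap K L t := τ.commutes t
    rw [ht, map_sum] at h3
    conv_rhs => rw [h, ht, ← h3, ← Finset.sum_sub_distrib]
    rw [hz, map_sum]
    refine Finset.sum_congr rfl fun i _ ↦ ?_
    rw [map_mul, map_natCast, pow_succ', AlgEquiv.mul_apply]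
    push_cast; ring
  rw [← ht] at hx ⊢
  obtain ⟨c, hc⟩ := hfix (z / algebraMap K L t + θ) (by
    rw [map_add, map_div₀, h2, hτ, AlgEquiv.commutes]
    field_simp
    ring)
  refine ⟨c, ?_⟩
  rw [hc]
  field_simp
  ring

variable {Γ : Type*} [LinearOrderedCommGroupWithZero Γ] (w : Valuation L Γ)

lemma val_natCast_le_one (n : ℕ) : w (n : L) ≤ 1 := by
  induction n with
  | zero => simp
  | succ n ih => push_cast; exact w.map_add_le ih w.map_one.le

/-- If `w (θ - c) > 1` for all `c ∈ K`, no element strictly dominates its other conjugates: its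
trace would have the same value as the element itself, while additive Hilbert 90 would exhibit
some `θ - c` as a quotient of value at most `1`. -/
lemma not_dominant [CharP L p] {θ : L} (hτ : τ θ = θ + 1) (hτp : τ ^ p = 1)
    (hfix : ∀ x, τ x = x → x ∈ Set.range (algebraMap K L))
    (hw : ∀ c : K, 1 < w (θ - algebraMap K L c)) (hp : 1 < p) (x : L)
    (hdom : ∀ i, 0 < i → i < p → w ((τ ^ i) x) < w x) : False := by
  have hx0 : 0 < w x := lt_of_le_of_lt zero_le (hdom 1 one_pos hp)
  have hT : w (∑ i ∈ Finset.range p, (τ ^ i) x) = w x := by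
    have := w.map_sum_eq_of_lt (s := Finset.range p) (f := fun i ↦ (τ ^ i) x) (j := 0)
      (Finset.mem_range.mpr (by omega)) (fun i hi ↦ by
        simp only [Finset.mem_sdiff, Finset.mem_range, Finset.mem_singleton] at hi
        simpa using hdom i (by omega) hi.1)
    simpa using this
  have hT0 : ∑ i ∈ Finset.range p, (τ ^ i) x ≠ 0 := by
    intro h
    rw [h, map_zero] at hT
    exact hx0.ne hT
  obtain ⟨c, hc⟩ := exists_weighted_sum_eq hτ hτp hfix x hT0
  have hz : w (∑ i ∈ Finset.range p, (i : L) * (τ ^ i) x) < w x := by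
    refine w.map_sum_lt hx0.ne' fun i hi ↦ ?_
    rcases Nat.eq_zero_or_pos i with rfl | hi0
    · simpa using hx0
    · rw [map_mul]
      exact (mul_le_of_le_one_left' (val_natCast_le_one w i)).trans_lt
        (hdom i hi0 (Finset.mem_range.mp hi))
  rw [hc, Valuation.map_neg, map_mul, hT] at hz
  exact absurd hz (not_lt.mpr (le_mul_of_one_le_right' (hw c).le))

/-- Every valuation with `w (θ - c) > 1` for all `c ∈ K` is invariant under `τ`: the product of
the conjugates of `x` whose value is maximal strictly dominates its own conjugates unless all
conjugates of `x` have the same value. -/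
lemma val_aut [Fact p.Prime] [CharP L p] {θ : L} (hτ : τ θ = θ + 1) (hτp : τ ^ p = 1)
    (hfix : ∀ x, τ x = x → x ∈ Set.range (algebraMap K L))
    (hw : ∀ c : K, 1 < w (θ - algebraMap K L c)) (x : L) : w (τ x) = w x := by
  have hp : p.Prime := Fact.out
  by_cases hx : x = 0
  · simp [hx]
  set f : ℕ → Γ := fun i ↦ w ((τ ^ i) x) with hf
  have hfmod : ∀ n, f (n % p) = f n := fun n ↦ by rw [hf]; simp only [pow_mod_apply hτp]
  have hfpos : ∀ n, 0 < f n := fun n ↦ zero_lt_iff.mpr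
    ((map_ne_zero w).mpr (EmbeddingLike.map_ne_zero_iff.mpr hx))
  obtain ⟨m, hm, hmax'⟩ := Finset.exists_max_image (Finset.range p) f
    ⟨0, Finset.mem_range.mpr hp.pos⟩
  have hmax : ∀ n, f n ≤ f m := fun n ↦ by
    rw [← hfmod]
    exact hmax' _ (Finset.mem_range.mpr (Nat.mod_lt _ hp.pos))
  set S := (Finset.range p).filter fun j ↦ f j = f m with hS
  set y := ∏ j ∈ S, (τ ^ j) x with hy
  have hwy : ∀ i, w ((τ ^ i) y) = ∏ j ∈ S, f (i + j) := fun i ↦ by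
    rw [hy, map_prod, map_prod]
    simp only [hf, pow_add, AlgEquiv.mul_apply]
  by_contra hne
  -- a shift preserving the set of maximal indices makes `f` constant, as it generates `ℤ/p`
  have key : ∀ i, 0 < i → i < p → ∃ j ∈ S, f (i + j) < f m := by
    intro i hi0 hip
    by_contra! hcon
    have hstep : ∀ j, f j = f m → f (i + j) = f m := fun j hj ↦ by
      have h1 := hcon (j % p) (by
        rw [hS, Finset.mem_filter, Finset.mem_range, hfmod]
        exact ⟨Nat.mod_lt _ hp.pos, hj⟩)
      have h2 : f (i + j % p) = f (i + j) := by
        rw [← hfmod (i + j % p), ← hfmod (i + j), Nat.add_mod_mod]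
      exact le_antisymm (hmax _) (h2 ▸ h1)
    have hiter : ∀ k, f (k * i + m) = f m := fun k ↦ by
      induction k with
      | zero => simp
      | succ k ih =>
        have := hstep _ ih
        rwa [← add_assoc, show i + k * i = (k + 1) * i by ring] at this
    have hall : ∀ n, f n = f m := fun n ↦ by
      have hi : (i : ZMod p) ≠ 0 := by
        rw [Ne, ZMod.natCast_eq_zero_iff]
        exact Nat.not_dvd_of_pos_of_lt hi0 hip
      have h1 := hiter (((n : ZMod p) - m) * (i : ZMod p)⁻¹).val
      have h2 : ((((n : ZMod p) - m) * (i : ZMod p)⁻¹).val * i + m) % p = n % p := by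
        rw [← Nat.ModEq, ← ZMod.natCast_eq_natCast_iff]
        push_cast
        rw [ZMod.natCast_zmod_val, inv_mul_cancel_right₀ hi]
        ring
      rw [← hfmod n, ← h2, hfmod]
      exact h1
    apply hne
    have h1 := (hall 1).trans (hall 0).symm
    simpa [hf] using h1
  refine not_dominant w hτ hτp hfix hw hp.one_lt y fun i hi0 hip ↦ ?_
  have h0 := hwy 0
  rw [pow_zero, AlgEquiv.one_apply] at h0
  rw [h0, hwy i]
  obtain ⟨j, hjS, hj⟩ := key i hi0 hip
  have hSm : ∀ j ∈ S, f (0 + j) = f m := fun j hj ↦ by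
    rw [zero_add]; exact (Finset.mem_filter.mp hj).2
  refine Finset.prod_lt_prod (fun j _ ↦ hfpos _) (fun j hj ↦ ?_) ⟨j, hjS, ?_⟩
  · rw [hSm j hj]; exact hmax _
  · rw [hSm j hjS]; exact hj

variable {w}

lemma val_aut_pow (hinv : ∀ x, w (τ x) = w x) (n : ℕ) (x : L) : w ((τ ^ n) x) = w x := by
  induction n with
  | zero => rfl
  | succ n ih => rw [pow_succ', AlgEquiv.mul_apply, hinv, ih]

lemma val_orbit_prod (hinv : ∀ x, w (τ x) = w x) (x : L) :
    w (∏ i ∈ Finset.range p, (τ ^ i) x) = w x ^ p := by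
  rw [map_prod, Finset.prod_congr rfl fun i _ ↦ val_aut_pow hinv i x]
  simp

/-- Let `u` be `w` or the valuation of another valuation ring over that of `K`. The
Artin–Schreier equation carries `1 < u (θ - c)` over from `w`, so `u` is invariant under `τ` by
`val_aut`. Hence `u (N x) = u x ^ p` with `N x ∈ K`, and membership of `x` in the valuation ring
is decided in `K`. -/
lemma artinSchreier_uniqueExtension [Fact p.Prime] [CharP L p] {θ : L} (hτ : τ θ = θ + 1)
    (hτp : τ ^ p = 1) (hfix : ∀ x, τ x = x → x ∈ Set.range (algebraMap K L))
    (hAS : θ ^ p - θ ∈ Set.range (algebraMap K L))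
    (hw : ∀ c : K, 1 < w (θ - algebraMap K L c)) : UniqueExtension K L w := by
  intro R hR
  have hp : p.Prime := Fact.out
  have hRK : ∀ y : K, R.valuation (algebraMap K L y) ≤ 1 ↔ w (algebraMap K L y) ≤ 1 := fun y ↦ by
    have := SetLike.ext_iff.mp hR y
    rw [ValuationSubring.valuation_le_one_iff]
    simpa [Subring.mem_comap, Valuation.mem_integer_iff] using this
  obtain ⟨d, hd⟩ := hAS
  have hwR : ∀ c : K, 1 < R.valuation (θ - algebraMap K L c) := by
    intro c
    by_contra! hc
    set t := θ - algebraMap K L c with ht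
    have htp : t ^ p - t = algebraMap K L (d - (c ^ p - c)) := by
      rw [ht, sub_pow_char]
      simp only [map_sub, map_pow, hd]
      ring
    have h1 : R.valuation (t ^ p - t) ≤ 1 := by
      refine Valuation.map_sub_le _ ?_ hc
      rw [map_pow]
      exact pow_le_one' hc p
    rw [htp, hRK, ← htp] at h1
    have h2 : w t < w (t ^ p) := by
      rw [map_pow]
      exact lt_self_pow₀ (hw c) hp.one_lt
    rw [Valuation.map_sub_eq_of_lt_left _ h2, map_pow] at h1
    exact absurd h1 (not_le.mpr (one_lt_pow₀ (hw c) hp.ne_zero))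
  have hi1 := val_aut w hτ hτp hfix hw
  have hi2 := val_aut R.valuation hτ hτp hfix hwR
  ext x
  obtain ⟨y, hy⟩ := range_of_orbit_prod hτp hfix x
  have h := hRK y
  rw [hy, val_orbit_prod hi1, val_orbit_prod hi2, pow_le_one_iff hp.ne_zero,
    pow_le_one_iff hp.ne_zero, ValuationSubring.valuation_le_one_iff] at h
  exact h

end Cyclic

/-! ### Residues of powers of an element -/

section Residue

open Polynomial in
lemma coeff_range_sum {F : Type*} [Field F] (n : ℕ) (f : ℕ → F) :
    (∑ i ∈ Finset.range n, C (f i) * X ^ i : F[X]).degree < (n : WithBot ℕ) ∧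
      ∀ j < n, (∑ i ∈ Finset.range n, C (f i) * X ^ i : F[X]).coeff j = f j := by
  constructor
  · rw [degree_lt_iff_coeff_zero]
    intro m hm
    simp [finsetSum_coeff, coeff_C_mul, coeff_X_pow, hm]
  · intro j hj
    simp [finsetSum_coeff, coeff_C_mul, coeff_X_pow, hj]

/-- An element `ξ ∉ k` with `ξ ^ p ∈ k` has degree `p` over `k`. -/
lemma eq_zero_of_sum_pow_mem {κ : Type*} [Field κ] {p : ℕ} [Fact p.Prime] [CharP κ p]
    (k : Subfield κ) {ξ : κ} (hξ : ξ ∉ k) (hξp : ξ ^ p ∈ k) (f : ℕ → k)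
    (hf : ∑ i ∈ Finset.range p, (f i : κ) * ξ ^ i = 0) : ∀ j < p, f j = 0 := by
  have hp : p.Prime := Fact.out
  have hirr : Irreducible (Polynomial.X ^ p - Polynomial.C (⟨ξ ^ p, hξp⟩ : k)) := by
    refine X_pow_sub_C_irreducible_of_prime hp fun b hb ↦ hξ ?_
    have h1 : (b : κ) ^ p = ξ ^ p := congrArg Subtype.val hb
    rw [← frobenius_inj κ p h1]
    exact b.2
  have hmin := minpoly.eq_of_irreducible_of_monic (x := ξ) hirr
    (by simp [sub_eq_zero]; rfl)
    (Polynomial.monic_X_pow_sub_C _ hp.ne_zero)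
  obtain ⟨hdeg, hcoeff⟩ := coeff_range_sum p f
  have hz := Polynomial.eq_zero_of_dvd_of_degree_lt (minpoly.dvd k ξ
    (p := ∑ i ∈ Finset.range p, Polynomial.C (f i) * Polynomial.X ^ i)
    (by rw [map_sum, ← hf]; refine Finset.sum_congr rfl fun i _ ↦ ?_; simp; exact Or.inl rfl))
    (by rw [← hmin, Polynomial.degree_X_pow_sub_C hp.pos]; exact hdeg)
  intro j hj
  rw [← hcoeff j hj, hz, Polynomial.coeff_zero]

lemma eq_zero_of_sum_pow_distinct {κ : Type*} [Field κ] {p : ℕ} (ξ : ℕ → κ)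
    (hξ : Set.InjOn ξ (Finset.range p)) (f : ℕ → κ)
    (hf : ∀ n < p, ∑ i ∈ Finset.range p, f i * ξ n ^ i = 0) : ∀ j < p, f j = 0 := by
  obtain ⟨hdeg, hcoeff⟩ := coeff_range_sum p f
  have hz := Polynomial.eq_zero_of_degree_lt_of_eval_index_eq_zero (s := Finset.range p) (v := ξ)
    (f := ∑ i ∈ Finset.range p, Polynomial.C (f i) * Polynomial.X ^ i) hξ
    (by simpa using hdeg)
    (fun n hn ↦ by
      simpa [Polynomial.eval_finsetSum] using hf n (Finset.mem_range.mp hn))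
  intro j hj
  rw [← hcoeff j hj, hz, Polynomial.coeff_zero]

variable {K L : Type*} [Field K] [Field L] [Algebra K L]
  {Γ : Type*} [LinearOrderedCommGroupWithZero Γ] (v : Valuation L Γ)

lemma residue_eq_zero_iff' (y : v.valuationSubring) :
    IsLocalRing.residue v.valuationSubring y = 0 ↔ v (y : L) < 1 := by
  rw [IsLocalRing.residue_eq_zero_iff, ValuationSubring.valuation_lt_one_iff]
  exact (v.isEquiv_valuation_valuationSubring).lt_one_iff_lt_one.symm

variable (K) in
/-- The residue field of `K`, as a subfield of the residue field of `(L, v)`. -/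
def residueSubfield : Subfield (IsLocalRing.ResidueField v.valuationSubring) where
  carrier := {r | ∃ (c : K) (h : v (algebraMap K L c) ≤ 1),
    IsLocalRing.residue v.valuationSubring ⟨algebraMap K L c, h⟩ = r}
  mul_mem' := by
    rintro _ _ ⟨a, ha, rfl⟩ ⟨b, hb, rfl⟩
    have h : v (algebraMap K L (a * b)) ≤ 1 := by
      rw [map_mul, map_mul]; exact mul_le_one' ha hb
    refine ⟨a * b, h, ?_⟩
    rw [← map_mul]; congr 1; ext; simp
  one_mem' := ⟨1, by simp, by rw [← map_one (IsLocalRing.residue _)]; congr 1; ext; simp⟩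
  add_mem' := by
    rintro _ _ ⟨a, ha, rfl⟩ ⟨b, hb, rfl⟩
    have h : v (algebraMap K L (a + b)) ≤ 1 := by
      rw [map_add]; exact v.map_add_le ha hb
    refine ⟨a + b, h, ?_⟩
    rw [← map_add]; congr 1; ext; simp
  zero_mem' := ⟨0, by simp, by rw [← map_zero (IsLocalRing.residue _)]; congr 1; ext; simp⟩
  neg_mem' := by
    rintro _ ⟨a, ha, rfl⟩
    refine ⟨-a, by rwa [map_neg, Valuation.map_neg], ?_⟩
    rw [← map_neg (IsLocalRing.residue _)]; congr 1; ext; simp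
  inv_mem' := by
    rintro _ ⟨a, ha, rfl⟩
    rcases ha.lt_or_eq with h | h
    · have h0 := (residue_eq_zero_iff' v ⟨algebraMap K L a, ha⟩).mpr h
      rw [h0, inv_zero]
      exact ⟨0, by simp, by rw [← map_zero (IsLocalRing.residue _)]; congr 1; ext; simp⟩
    · have ha0 : algebraMap K L a ≠ 0 := by
        intro h0
        rw [h0, map_zero] at h
        exact zero_ne_one h
      refine ⟨a⁻¹, by rw [map_inv₀, map_inv₀, h, inv_one], ?_⟩
      apply eq_inv_of_mul_eq_one_left
      rw [← map_mul, ← map_one (IsLocalRing.residue _)]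
      congr 1; ext; simp [inv_mul_cancel₀ ha0]

lemma residue_sum {p : ℕ} (c : ℕ → L) (hc : ∀ i, v (c i) ≤ 1) (x : L) (hx : v x ≤ 1)
    (h : v (∑ i ∈ Finset.range p, c i * x ^ i) < 1) :
    ∑ i ∈ Finset.range p, IsLocalRing.residue v.valuationSubring ⟨c i, hc i⟩ *
      IsLocalRing.residue v.valuationSubring ⟨x, hx⟩ ^ i = 0 := by
  simp only [← map_pow, ← map_mul, ← map_sum]
  rw [residue_eq_zero_iff']
  convert h
  push_cast
  rfl

variable {v} {p : ℕ} {τ : L ≃ₐ[K] L}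

lemma val_pow_sub_lt (hinv : ∀ x, v (τ x) = v x) {x : L} (m : ℕ)
    (h : v ((τ ^ m) x - x) < 1) (k : ℕ) : v ((τ ^ (m * k)) x - x) < 1 := by
  induction k with
  | zero => simp
  | succ k ih =>
    have e : (τ ^ (m * (k + 1))) x - x =
        (τ ^ (m * k)) ((τ ^ m) x - x) + ((τ ^ (m * k)) x - x) := by
      rw [Nat.mul_succ, pow_add, AlgEquiv.mul_apply, map_sub]; ring
    rw [e]
    refine v.map_add_lt ?_ ih
    rw [val_aut_pow hinv]; exact h

/-- If the residue of `x` is not in `Kv`, then it has degree at least `p` over `Kv`: either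
the conjugates of `x` have distinct residues, or they all have the same residue `ξ`, and then `ξ`
is purely inseparable of degree `p`, since `ξ ^ p` is the residue of the norm of `x`. -/
lemma val_coeff_lt_one [Fact p.Prime] [CharP L p] (hτp : τ ^ p = 1)
    (hfix : ∀ x, τ x = x → x ∈ Set.range (algebraMap K L))
    (hinv : ∀ x, v (τ x) = v x) {x : L} (hx : v x = 1)
    (hxK : ∀ c : K, 1 ≤ v (x - algebraMap K L c)) (c : ℕ → K)
    (hc : ∀ i, v (algebraMap K L (c i)) ≤ 1)
    (hsum : v (∑ i ∈ Finset.range p, algebraMap K L (c i) * x ^ i) < 1) :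
    ∀ i < p, v (algebraMap K L (c i)) < 1 := by
  have hp : p.Prime := Fact.out
  set κ := IsLocalRing.ResidueField v.valuationSubring with hκ
  set res := IsLocalRing.residue v.valuationSubring with hres
  have hxn : ∀ n, v ((τ ^ n) x) ≤ 1 := fun n ↦ by rw [val_aut_pow hinv, hx]
  have hreseq : ∀ (a b : v.valuationSubring), res a = res b ↔ v ((a : L) - b) < 1 := by
    intro a b
    rw [← sub_eq_zero, ← map_sub, residue_eq_zero_iff']
    rfl
  have hsumn : ∀ n, ∑ i ∈ Finset.range p, res ⟨algebraMap K L (c i), hc i⟩ *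
      res ⟨(τ ^ n) x, hxn n⟩ ^ i = 0 := fun n ↦ by
    refine residue_sum v (fun i ↦ algebraMap K L (c i)) hc _ (hxn n) ?_
    rw [← val_aut_pow hinv n, map_sum] at hsum
    simpa only [map_mul, map_pow, AlgEquiv.commutes] using hsum
  suffices h : ∀ i < p, res ⟨algebraMap K L (c i), hc i⟩ = 0 by
    intro i hi
    exact (residue_eq_zero_iff' v _).mp (h i hi)
  by_cases hfixed : v (τ x - x) < 1
  · have : CharP κ p := (CharP.charP_iff_prime_eq_zero hp).mpr (by
      have h0 : ((p : ℕ) : v.valuationSubring) = 0 := by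
        ext; push_cast; exact CharP.cast_eq_zero L p
      rw [← map_natCast res, h0, map_zero])
    have hall : ∀ n, res ⟨(τ ^ n) x, hxn n⟩ = res ⟨x, hx.le⟩ := fun n ↦ by
      rw [hreseq]
      have := val_pow_sub_lt (τ := τ) hinv (x := x) 1 (by simpa using hfixed) n
      rwa [one_mul] at this
    have hpow : res ⟨x, hx.le⟩ ^ p ∈ residueSubfield K v := by
      obtain ⟨n, hn⟩ := range_of_orbit_prod hτp hfix x
      have hn1 : v (algebraMap K L n) ≤ 1 := by rw [hn, val_orbit_prod hinv, hx, one_pow]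
      refine ⟨n, hn1, ?_⟩
      have e : (⟨algebraMap K L n, hn1⟩ : v.valuationSubring) =
          ∏ i ∈ Finset.range p, ⟨(τ ^ i) x, hxn i⟩ := by
        ext; push_cast; exact hn
      rw [← hres, e, map_prod, Finset.prod_congr rfl fun i _ ↦ hall i]
      simp
    have hnot : res ⟨x, hx.le⟩ ∉ residueSubfield K v := by
      rintro ⟨a, ha, h⟩
      have h1 := (hreseq _ _).mp h
      rw [Valuation.map_sub_swap] at h1
      exact absurd h1 (not_lt.mpr (hxK a))
    have := eq_zero_of_sum_pow_mem (residueSubfield K v) hnot hpow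
      (fun i ↦ ⟨res ⟨algebraMap K L (c i), hc i⟩, c i, hc i, rfl⟩) (hsumn 0)
    intro i hi
    exact congrArg Subtype.val (this i hi)
  · refine eq_zero_of_sum_pow_distinct (fun n ↦ res ⟨(τ ^ n) x, hxn n⟩) ?_ _
      (fun n _ ↦ hsumn n)
    have hlt : ∀ i j, i < j → j < p →
        res ⟨(τ ^ i) x, hxn i⟩ ≠ res ⟨(τ ^ j) x, hxn j⟩ := by
      intro i j hij hj h
      rw [eq_comm, hreseq] at h
      obtain ⟨m, rfl⟩ := Nat.exists_eq_add_of_lt hij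
      apply hfixed
      have h1 : v ((τ ^ (m + 1)) x - x) < 1 := by
        rw [← val_aut_pow hinv i, map_sub]
        simpa only [add_assoc, pow_add, AlgEquiv.mul_apply] using h
      -- a multiple of `m + 1` is congruent to `1` modulo `p`
      have hm0 : ((m + 1 : ℕ) : ZMod p) ≠ 0 := by
        rw [Ne, ZMod.natCast_eq_zero_iff]
        exact Nat.not_dvd_of_pos_of_lt (by omega) (by omega)
      have h2 := val_pow_sub_lt hinv (m + 1) h1 ((m + 1 : ℕ) : ZMod p)⁻¹.val
      have h3 : ((m + 1) * ((m + 1 : ℕ) : ZMod p)⁻¹.val) % p = 1 % p := by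
        rw [← Nat.ModEq, ← ZMod.natCast_eq_natCast_iff]
        rw [Nat.cast_mul, ZMod.natCast_zmod_val, mul_inv_cancel₀ hm0, Nat.cast_one]
      rwa [← pow_mod_apply hτp, h3, pow_mod_apply hτp, pow_one] at h2
    intro i hi j hj h
    simp only [Finset.coe_range, Set.mem_Iio] at hi hj
    rcases lt_trichotomy i j with h1 | h1 | h1
    · exact absurd h (hlt i j h1 hj)
    · exact h1
    · exact absurd h.symm (hlt j i h1 hi)

end Residue

/-! ### Approximation of elements of the extension -/

section Immediate

variable {K L : Type*} [Field K] [Field L] [Algebra K L]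
  {Γ : Type*} [LinearOrderedCommGroupWithZero Γ] {v : Valuation L Γ} {p : ℕ} {τ : L ≃ₐ[K] L}

lemma exists_eq_sum_pow [Fact p.Prime] (hfr : Module.finrank K L = p) {x : L}
    (hx : x ∉ Set.range (algebraMap K L)) (y : L) :
    ∃ c : ℕ → K, y = ∑ i ∈ Finset.range p, algebraMap K L (c i) * x ^ i := by
  have hp : p.Prime := Fact.out
  have hfd : FiniteDimensional K L := Module.finite_of_finrank_pos (hfr ▸ hp.pos)
  have hso := IntermediateField.isSimpleOrder_of_finrank_prime K L (hfr ▸ hp)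
  have htop : IntermediateField.adjoin K {x} = ⊤ := by
    rcases hso.eq_bot_or_eq_top (IntermediateField.adjoin K {x}) with h | h
    · exact absurd (IntermediateField.mem_bot.mp
        (h ▸ IntermediateField.mem_adjoin_simple_self K x)) hx
    · exact h
  have hint : IsIntegral K x := IsIntegral.of_finite K x
  have hdeg : (minpoly K x).natDegree = p := by
    rw [← IntermediateField.adjoin.finrank hint, htop, IntermediateField.finrank_top', hfr]
  have hy : y ∈ Algebra.adjoin K {x} := by
    rw [← IntermediateField.adjoin_simple_toSubalgebra_of_isAlgebraic hint.isAlgebraic, htop]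
    trivial
  rw [Algebra.adjoin_singleton_eq_range_aeval] at hy
  obtain ⟨f, hf⟩ := hy
  have hmod : Polynomial.aeval x (f %ₘ minpoly K x) = y := by
    rw [Polynomial.aeval_modByMonic_eq_self_of_root (minpoly.aeval K x)]
    exact hf
  refine ⟨(f %ₘ minpoly K x).coeff, ?_⟩
  have hlt : (f %ₘ minpoly K x).natDegree < p := by
    rw [← hdeg]
    exact Polynomial.natDegree_modByMonic_lt f (minpoly.monic hint)
      (fun h ↦ by rw [h, Polynomial.natDegree_one] at hdeg; exact hp.ne_zero hdeg.symm)
  rw [← hmod, Polynomial.aeval_eq_sum_range' hlt]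
  simp only [Algebra.smul_def]

/-- If `v x ∉ vK`, then `v x` has order `p` modulo `vK`, hence the nonzero terms of
`∑ c i * x ^ i` have distinct values. -/
lemma val_coeff_zero_le_of_ramified [Fact p.Prime] (hτp : τ ^ p = 1)
    (hfix : ∀ x, τ x = x → x ∈ Set.range (algebraMap K L))
    (hinv : ∀ x, v (τ x) = v x) {x : L} (hx0 : x ≠ 0)
    (hxK : ∀ a : K, v (algebraMap K L a) ≠ v x) (c : ℕ → K) :
    v (algebraMap K L (c 0)) ≤ v (∑ i ∈ Finset.range p, algebraMap K L (c i) * x ^ i) := by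
  have hp : p.Prime := Fact.out
  set t : ℕ → L := fun i ↦ algebraMap K L (c i) * x ^ i with ht
  have hvx : v x ≠ 0 := (map_ne_zero v).mpr hx0
  have hdist : ∀ i j, i < j → j < p → v (t j) ≠ 0 → v (t i) ≠ v (t j) := by
    intro i j hij hj hj0 h
    obtain ⟨n, hn⟩ := range_of_orbit_prod hτp hfix x
    have hnv : v (algebraMap K L n) = v x ^ p := by rw [hn, val_orbit_prod hinv]
    have hcj : v (algebraMap K L (c j)) ≠ 0 := by
      intro h0
      apply hj0
      rw [ht]; simp only [map_mul, h0, zero_mul]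
    have hm : v (algebraMap K L (c i / c j)) = v x ^ (j - i) := by
      rw [map_div₀, map_div₀, div_eq_iff hcj]
      simp only [ht, map_mul, map_pow] at h
      rw [show j = (j - i) + i by omega, pow_add, ← mul_assoc] at h
      have h2 := mul_right_cancel₀ (pow_ne_zero i hvx) h
      rw [show j - i + i = j by omega] at h2
      rw [h2, mul_comm]
    have hcop : IsCoprime ((j - i : ℕ) : ℤ) (p : ℤ) := by
      rw [Nat.isCoprime_iff_coprime]
      exact (Nat.coprime_of_lt_prime (by omega) (by omega) hp).symm
    obtain ⟨a, b, hab⟩ := hcop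
    refine hxK ((c i / c j) ^ a * n ^ b) ?_
    rw [map_mul, map_zpow₀, map_zpow₀, map_mul, map_zpow₀, map_zpow₀, hm, hnv,
      ← zpow_natCast, ← zpow_natCast, ← zpow_mul, ← zpow_mul, ← zpow_add₀ hvx,
      mul_comm _ a, mul_comm _ b, hab, zpow_one]
  obtain ⟨m, hm, hmax⟩ := Finset.exists_max_image (Finset.range p) (fun i ↦ v (t i))
    ⟨0, Finset.mem_range.mpr hp.pos⟩
  have h0 : v (algebraMap K L (c 0)) = v (t 0) := by simp [ht]
  have h0m := hmax 0 (Finset.mem_range.mpr hp.pos)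
  rw [h0]
  by_cases hm0 : v (t m) = 0
  · rw [hm0] at h0m
    exact h0m.trans zero_le
  rw [v.map_sum_eq_of_lt hm]
  · exact h0m
  · intro i hi
    simp only [Finset.mem_sdiff, Finset.mem_singleton] at hi
    refine lt_of_le_of_ne (hmax i hi.1) fun h ↦ ?_
    rcases lt_or_gt_of_ne hi.2 with h1 | h1
    · exact hdist i m h1 (Finset.mem_range.mp hm) hm0 h
    · exact hdist m i h1 (Finset.mem_range.mp hi.1) (h ▸ hm0) h.symm

/-- If `v x = 1` and the residue of `x` is not in `Kv`, then its powers below `p` are linearly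
independent over `Kv`, so that `v (∑ c i * x ^ i)` is the maximum of the `v (c i)`. -/
lemma val_coeff_zero_le_of_inert [Fact p.Prime] [CharP L p] (hτp : τ ^ p = 1)
    (hfix : ∀ x, τ x = x → x ∈ Set.range (algebraMap K L))
    (hinv : ∀ x, v (τ x) = v x) {x : L} (hx : v x = 1)
    (hxK : ∀ c : K, 1 ≤ v (x - algebraMap K L c)) (c : ℕ → K) :
    v (algebraMap K L (c 0)) ≤ v (∑ i ∈ Finset.range p, algebraMap K L (c i) * x ^ i) := by
  have hp : p.Prime := Fact.out
  obtain ⟨m, hm, hmax⟩ := Finset.exists_max_image (Finset.range p)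
    (fun i ↦ v (algebraMap K L (c i))) ⟨0, Finset.mem_range.mpr hp.pos⟩
  have hm' := Finset.mem_range.mp hm
  refine (hmax 0 (Finset.mem_range.mpr hp.pos)).trans ?_
  by_contra! hlt
  have hpos : 0 < v (algebraMap K L (c m)) := lt_of_le_of_lt zero_le hlt
  -- scale by the largest coefficient; indices `≥ p` are set to `0`
  set c' : ℕ → K := fun i ↦ if i < p then c i / c m else 0 with hc'
  have h1 : ∀ i, v (algebraMap K L (c' i)) ≤ 1 := by
    intro i
    by_cases hi : i < p
    · simp only [hc', hi, if_true, map_div₀]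
      exact div_le_one_of_le₀ (hmax i (Finset.mem_range.mpr hi)) zero_le
    · simp [hc', hi]
  have h2 : v (∑ i ∈ Finset.range p, algebraMap K L (c' i) * x ^ i) < 1 := by
    have e : ∑ i ∈ Finset.range p, algebraMap K L (c' i) * x ^ i =
        (∑ i ∈ Finset.range p, algebraMap K L (c i) * x ^ i) / algebraMap K L (c m) := by
      rw [Finset.sum_div]
      refine Finset.sum_congr rfl fun i hi ↦ ?_
      simp only [hc', Finset.mem_range.mp hi, if_true, map_div₀]
      ring
    rw [e, map_div₀]
    exact (div_lt_one₀ hpos).mpr hlt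
  have h3 := val_coeff_lt_one hτp hfix hinv hx hxK c' h1 h2 m hm'
  simp only [hc', hm', if_true, map_div₀, div_self hpos.ne', lt_self_iff_false] at h3

/-- If the values `v (θ - c)` have no minimum, every nonzero `x ∈ L` can be approximated by
elements of `K`. Otherwise `1, x, …, x ^ (p - 1)` is a basis in which the constant coefficient
`c₀` of `θ` satisfies `v (c₀ - c) ≤ v (θ - c)` for all `c`, so that `v (θ - c₀)` is a
minimum. -/
lemma exists_approx [Fact p.Prime] [CharP L p] (hfr : Module.finrank K L = p) (hτp : τ ^ p = 1)
    (hfix : ∀ x, τ x = x → x ∈ Set.range (algebraMap K L))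
    (hinv : ∀ x, v (τ x) = v x) {θ : L}
    (hmin : ∀ c : K, ∃ c' : K, v (θ - algebraMap K L c') < v (θ - algebraMap K L c))
    (x : L) (hx0 : x ≠ 0) : ∃ c : K, v (x - algebraMap K L c) < v x := by
  have hp : p.Prime := Fact.out
  by_contra! hcon
  have main : ∀ x : L, x ∉ Set.range (algebraMap K L) → ¬ ∀ c : ℕ → K,
      v (algebraMap K L (c 0)) ≤
        v (∑ i ∈ Finset.range p, algebraMap K L (c i) * x ^ i) := by
    intro x hx hcl
    obtain ⟨c, hc⟩ := exists_eq_sum_pow hfr hx θ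
    obtain ⟨a, ha⟩ := hmin (c 0)
    have h1 := hcl (fun i ↦ if i = 0 then c 0 - a else c i)
    have e : ∑ i ∈ Finset.range p, algebraMap K L (if i = 0 then c 0 - a else c i) * x ^ i
        = θ - algebraMap K L a := by
      rw [hc, ← Finset.sum_erase_add _ _ (Finset.mem_range.mpr hp.pos),
        ← Finset.sum_erase_add (Finset.range p) (fun i ↦ algebraMap K L (c i) * x ^ i)
          (Finset.mem_range.mpr hp.pos)]
      rw [Finset.sum_congr rfl (g := fun i ↦ algebraMap K L (c i) * x ^ i) fun i hi ↦ by
        rw [if_neg (Finset.ne_of_mem_erase hi)]]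
      simp only [if_true, pow_zero, map_sub]
      ring
    rw [e] at h1
    simp only [if_true] at h1
    have h2 : v (θ - algebraMap K L (c 0)) ≤ v (θ - algebraMap K L a) := by
      have e2 : θ - algebraMap K L (c 0) =
          (θ - algebraMap K L a) - algebraMap K L (c 0 - a) := by
        rw [map_sub]; ring
      rw [e2]
      exact v.map_sub_le le_rfl h1
    exact absurd ha (not_lt.mpr h2)
  have hvx : 0 < v x := zero_lt_iff.mpr ((map_ne_zero v).mpr hx0)
  have hxK : x ∉ Set.range (algebraMap K L) := by
    rintro ⟨c, rfl⟩
    have := hcon c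
    rw [sub_self, map_zero] at this
    exact absurd hvx (not_lt.mpr this)
  by_cases hram : ∃ a : K, v (algebraMap K L a) = v x
  · obtain ⟨a, ha⟩ := hram
    have ha0 : algebraMap K L a ≠ 0 := by
      intro h
      rw [h, map_zero] at ha
      exact hvx.ne ha
    refine main (x / algebraMap K L a) ?_
      (val_coeff_zero_le_of_inert hτp hfix hinv ?_ fun c ↦ ?_)
    · rintro ⟨b, hb⟩
      exact hxK ⟨b * a, by rw [map_mul, hb, div_mul_cancel₀ _ ha0]⟩
    · rw [map_div₀, ha, div_self hvx.ne']
    · have h := hcon (c * a)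
      have e : x / algebraMap K L a - algebraMap K L c =
          (x - algebraMap K L (c * a)) / algebraMap K L a := by
        rw [map_mul]; field_simp
      rw [e, map_div₀, ha]
      exact (one_le_div₀ hvx).mpr h
  · push Not at hram
    exact main x hxK (val_coeff_zero_le_of_ramified hτp hfix hinv hx0 hram)

end Immediate

/-! ### Purely inseparable and Artin–Schreier generators -/

/-- Let `(K,v)` be a valued field of characteristic `p > 0`, let
`(K(η)|K,v)` be a purely inseparable extension and `(K(θ)|K,v)` an Artin-Schreier
extension (both inside a valued extension field `(Ω,v)` of `(K,v)`).  Then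
`K(η,θ)|K(θ)` is purely inseparable, so the extension of `v` from `K(θ)` to `K(η,θ)`
is unique.  If `v(η−θ) > v(θ−c)` for all `c ∈ K` (multiplicatively: `v(η−θ) < v(θ−c)`),
then the extension of `v` from `K` to `K(θ)` is unique.  If in addition `(K(η)|K,v)` is
immediate, then `(K(θ)|K,v)` is immediate, with defect `p`. -/
theorem statement13 {K Ω : Type*} [Field K] [Field Ω] [Algebra K Ω]
    {Γ : Type*} [LinearOrderedCommGroupWithZero Γ] (v : Valuation Ω Γ)
    (p : ℕ) [Fact p.Prime] [CharP K p]
    (η θ : Ω)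
    (hPI : IsPurelyInseparable K (IntermediateField.adjoin K {η}))
    (hASnt : θ ∉ Set.range (algebraMap K Ω))
    (hAS : θ ^ p - θ ∈ Set.range (algebraMap K Ω)) :
    -- K(η,θ)|K(θ) is purely inseparable ...
    IsPurelyInseparable (IntermediateField.adjoin K {θ})
      (IntermediateField.adjoin (IntermediateField.adjoin K {θ}) {η}) ∧
    UniqueExtension (IntermediateField.adjoin K {θ})
      (IntermediateField.adjoin (IntermediateField.adjoin K {θ}) {η})
      (v.comap (algebraMap
        (IntermediateField.adjoin (IntermediateField.adjoin K {θ}) {η}) Ω)) ∧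
    -- the conditional conclusions
    ((∀ c : K, v (η - θ) < v (θ - algebraMap K Ω c)) →
      UniqueExtension K (IntermediateField.adjoin K {θ})
        (v.comap (algebraMap (IntermediateField.adjoin K {θ}) Ω)) ∧
      (IsImmediate v (IntermediateField.adjoin K {η}) →
        IsImmediate v (IntermediateField.adjoin K {θ}))) := by
  have hp : p.Prime := Fact.out
  have : ExpChar K p := ExpChar.prime hp
  set L := IntermediateField.adjoin K {θ} with hL
  have : CharP L p := charP_of_injective_algebraMap (algebraMap K L).injective p
  have : ExpChar L p := ExpChar.prime hp
  obtain ⟨n, hn⟩ := (IntermediateField.isPurelyInseparable_adjoin_simple_iff_pow_mem K Ω p).mp hPI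
  obtain ⟨a, ha⟩ := hn
  have hPI' : IsPurelyInseparable L (IntermediateField.adjoin L {η}) := by
    rw [IntermediateField.isPurelyInseparable_adjoin_simple_iff_pow_mem L Ω p]
    exact ⟨n, algebraMap K L a, ha⟩
  refine ⟨hPI', isPurelyInseparable_uniqueExtension _ p, fun h ↦ ?_⟩
  have hone := one_lt_of_approx v p η θ hAS n ⟨a, ha⟩ h
  set w : Valuation L Γ := v.comap (algebraMap L Ω) with hw
  set θ' : L := ⟨θ, IntermediateField.mem_adjoin_simple_self K θ⟩ with hθ'
  have hwv : ∀ c : K, w (θ' - algebraMap K L c) = v (θ - algebraMap K Ω c) := fun c ↦ rfl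
  have hAS' : θ' ^ p - θ' ∈ Set.range (algebraMap K L) := by
    obtain ⟨d, hd⟩ := hAS
    exact ⟨d, Subtype.ext hd⟩
  obtain ⟨τ, hτ, hτp, hfix, hfr⟩ := artinSchreier_exists_aut p θ'
    (IntermediateField.lift_injective L (by
      rw [IntermediateField.lift_adjoin_simple, IntermediateField.lift_top]))
    (by rintro ⟨c, hc⟩; exact hASnt ⟨c, congrArg Subtype.val hc⟩) hAS'
  have hone' : ∀ c : K, 1 < w (θ' - algebraMap K L c) := hone
  refine ⟨artinSchreier_uniqueExtension hτ hτp hfix hAS' hone', fun him ↦ ?_⟩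
  have hinv := val_aut w hτ hτp hfix hone'
  have hηθ : ∀ c : K, v (η - algebraMap K Ω c) = v (θ - algebraMap K Ω c) := fun c ↦ by
    rw [← sub_add_sub_cancel η θ (algebraMap K Ω c)]
    exact Valuation.map_add_eq_of_lt_right _ (h c)
  -- `v (η - c)` has no minimum since `K(η)` is immediate, and it agrees with `v (θ - c)`
  have hmin : ∀ c : K, ∃ c' : K,
      w (θ' - algebraMap K L c') < w (θ' - algebraMap K L c) := by
    intro c
    simp only [hwv, ← hηθ]
    have hmem : ∀ b : K, algebraMap K Ω b ∈ IntermediateField.adjoin K {η} := fun b ↦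
      IntermediateField.algebraMap_mem _ b
    have hη : η ∈ IntermediateField.adjoin K {η} := IntermediateField.mem_adjoin_simple_self K η
    have hpos : 0 < v (η - algebraMap K Ω c) := by
      rw [hηθ]; exact lt_of_le_of_lt zero_le (h c)
    obtain ⟨b, hb⟩ := him.1 ⟨η - algebraMap K Ω c, sub_mem hη (hmem c)⟩
    simp only at hb
    have hb0 : algebraMap K Ω b ≠ 0 := by
      intro h0
      rw [h0, map_zero] at hb
      exact hpos.ne hb
    obtain ⟨e, he⟩ := him.2
      ⟨(η - algebraMap K Ω c) / algebraMap K Ω b, div_mem (sub_mem hη (hmem c)) (hmem b)⟩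
      (by simp only [map_div₀, hb, div_self hpos.ne', le_refl])
    refine ⟨c + e * b, ?_⟩
    have e1 : η - algebraMap K Ω (c + e * b) =
        ((η - algebraMap K Ω c) / algebraMap K Ω b - algebraMap K Ω e) * algebraMap K Ω b := by
      rw [map_add, map_mul]; field_simp; ring
    rw [e1, map_mul, hb]
    exact mul_lt_of_lt_one_left hpos he
  have happ := exists_approx hfr hτp hfix hinv hmin
  refine ⟨fun x ↦ ?_, fun x hx ↦ ?_⟩
  · by_cases hx0 : x = 0
    · exact ⟨0, by simp [hx0]⟩
    obtain ⟨c, hc⟩ := happ x hx0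
    refine ⟨c, ?_⟩
    have h1 : w (algebraMap K L c) = w x := by
      rw [← w.map_sub_eq_of_lt_left hc, sub_sub_cancel]
    exact h1
  · by_cases hx0 : x = 0
    · exact ⟨0, by simp [hx0]⟩
    obtain ⟨c, hc⟩ := happ x hx0
    exact ⟨c, lt_of_lt_of_le hc hx⟩

end Statement13
end

section
/- Let (K,v) be a valued field of characteristic p > 0 and (K(η)|K,v) a purely inseparable extension of degree p with η^p ∈ K such that v(η−K) is bounded above by an element of vK. Let d ∈ K satisfy (p−1)·vd > p·α − vη for all α ∈ v(η−K), and let θ̃_d be a root of Y^p − d^{p−1}Y − η^p. Then θ_d := θ̃_d/d is a root of X^p − X − η^p/d^p, K(θ_d)|K is an Artin-Schreier extension with a unique extension of v from K to K(θ_d), and moreover: v(θ̃_d − K) = v(η−K); v(η/d − θ_d) > v(θ_d − c) for all c ∈ K; and v(θ_d − K) = v(η−K) − vd. -/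
/-!
Values are written multiplicatively. Put `T = θt`, `θ = T / d`.

In characteristic `p` the equation for `T` says `(T - η) ^ p = d ^ (p - 1) * T`. The hypothesis
on `d` gives `v d < v η`, hence `v T = v η` and `v (T - η) ^ p = v d ^ (p - 1) * v η`, so the same
hypothesis says `v (T - η) < v (η - c)` for all `c ∈ K`. By the ultrametric inequality
`v (T - c) = v (η - c)`, and all the statements about values follow. In addition
`v d < v (T - η)`, so `1 < v (θ - c)` for all `c ∈ K`.

This last inequality forces the extension of `v` to `F = K(θ)` to be unique. The field `F` is
Galois over `K`, and every nontrivial element of `G = Gal(F/K)` generates `G`. If `v` were not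
`G`-invariant, there would be `u ∈ F` with `v (g u) < v u` for all `g ≠ 1`
(`exists_dominating`). Since `g θ - θ` lies in the prime field, the trace quotient
`c = Tr(u θ) / Tr(u)` would then satisfy `v (θ - c) ≤ 1` (`exists_approx`), a contradiction.
So `v` is `G`-invariant, and an invariant valuation is the only extension of its restriction
(`uniqueExtension_of_invariant`): elements of value at most one are integral over the valuation
ring of `K`, and the norm of an element of value greater than one has value greater than one.
-/

namespace Statement15

/-- The extension of the valuation `v` from `K` to `F` is unique: there is exactly one
valuation ring of `F` lying over the valuation ring of the restriction of `v` to `K`,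
namely that of `v`.  (Valuation subrings of `F` whose preimage in `K` is the valuation
ring of `v|K` correspond exactly to the extensions of `v|K` to `F`, up to equivalence.) -/
def UniqueExtension (K F : Type*) [Field K] [Field F] [Algebra K F]
    {Γ : Type*} [LinearOrderedCommGroupWithZero Γ] (v : Valuation F Γ) : Prop :=
  ∀ R : ValuationSubring F,
    R.toSubring.comap (algebraMap K F) = (v.comap (algebraMap K F)).integer →
    R = v.valuationSubring

/-! ### Galois theory of `X ^ p - X - b` -/

open Polynomial in
/-- An element `θ` with `θ ^ p - θ ∈ K` generates a Galois extension of `K`: it is the splitting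
field of the separable polynomial `X ^ p - X - b`. -/
theorem isGalois_adjoin {K Ω : Type*} [Field K] [Field Ω] [Algebra K Ω] (p : ℕ) [Fact p.Prime]
    [CharP K p] (θ : Ω) (b : K) (hθ : θ ^ p - θ = algebraMap K Ω b) :
    FiniteDimensional K (IntermediateField.adjoin K {θ}) ∧
      IsGalois K (IntermediateField.adjoin K {θ}) := by
  have hp : p.Prime := Fact.out
  have : CharP Ω p := charP_of_injective_algebraMap (algebraMap K Ω).injective p
  set F := IntermediateField.adjoin K {θ} with hF
  set P : K[X] := X ^ p - X - C b with hP
  have hdeg : (X ^ p - X : K[X]).natDegree = p :=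
    FiniteField.X_pow_card_sub_X_natDegree_eq K hp.one_lt
  have hP0 : P ≠ 0 := by
    intro h
    have h1 : P.natDegree = p := by rw [hP, natDegree_sub_C, hdeg]
    rw [h, natDegree_zero] at h1
    exact hp.ne_zero h1.symm
  have hsep : P.Separable := by
    have hd : derivative P = -1 := by
      simp [hP, derivative_X_pow]
    rw [Polynomial.separable_def, hd]
    exact (isCoprime_one_right (x := P)).neg_right
  have hθF : θ ∈ F := IntermediateField.mem_adjoin_simple_self K θ
  -- `X ^ p - X - b` is a translate by `θ` of `X ^ p - X`, which splits over `𝔽_p`.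
  have hsplit : (P.map (algebraMap K F)).Splits := by
    have : CharP F p := charP_of_injective_algebraMap (algebraMap K F).injective p
    have h1 := ((GaloisField.splits_zmod_X_pow_sub_X p).map (ZMod.castHom dvd_rfl F)).comp_X_sub_C
      (⟨θ, hθF⟩ : F)
    have h2 : (⟨θ, hθF⟩ : F) ^ p - ⟨θ, hθF⟩ = algebraMap K F b := Subtype.ext hθ
    convert! h1 using 1
    simp only [hP, Polynomial.map_sub, Polynomial.map_pow, map_X, map_C, sub_comp, pow_comp,
      X_comp, sub_pow_char, ← h2, C_sub, C_pow]
    ring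
  have hsf : P.IsSplittingField K F := by
    refine IntermediateField.isSplittingField_iff.2 ⟨hsplit, le_antisymm ?_ ?_⟩
    · refine IntermediateField.adjoin_simple_le_iff.2 (IntermediateField.subset_adjoin _ _ ?_)
      rw [mem_rootSet]
      exact ⟨hP0, by simp [hP, hθ]⟩
    · refine IntermediateField.adjoin_le_iff.2 fun x hx ↦ ?_
      rw [← hsplit.image_rootSet F.val] at hx
      obtain ⟨y, -, rfl⟩ := hx
      exact y.2
  exact ⟨IsSplittingField.finiteDimensional F P, IsGalois.of_separable_splitting_field hsep⟩

/-- Fixed points of Frobenius in characteristic `p` are natural numbers. -/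
theorem exists_natCast_of_pow_eq {F : Type*} [Field F] (p : ℕ) [Fact p.Prime] [CharP F p] {x : F}
    (hx : x ^ p = x) : ∃ n : ℕ, x = n := by
  have h := (Subfield.mem_bot_iff_pow_eq_self F p).2 hx
  rw [← ZMod.fieldRange_castHom_eq_bot p] at h
  obtain ⟨n, hn⟩ := h
  obtain ⟨m, rfl⟩ := ZMod.natCast_zmod_surjective n
  exact ⟨m, by simpa using hn.symm⟩

/-- If all the differences `g θ - θ` lie in the prime field, then every nontrivial automorphism
of `K(θ)` over `K` generates the Galois group: `g ↦ g θ - θ` embeds the group into `𝔽_p`. -/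
theorem exists_pow_eq {K Ω : Type*} [Field K] [Field Ω] [Algebra K Ω] (p : ℕ) [Fact p.Prime]
    [CharP K p] (θ : Ω) (hθ : ∀ g : IntermediateField.adjoin K {θ} ≃ₐ[K]
      IntermediateField.adjoin K {θ}, (g (IntermediateField.AdjoinSimple.gen K θ) -
        IntermediateField.AdjoinSimple.gen K θ) ^ p = g (IntermediateField.AdjoinSimple.gen K θ) -
        IntermediateField.AdjoinSimple.gen K θ)
    (g : IntermediateField.adjoin K {θ} ≃ₐ[K] IntermediateField.adjoin K {θ}) (hg : g ≠ 1)
    (h : IntermediateField.adjoin K {θ} ≃ₐ[K] IntermediateField.adjoin K {θ}) :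
    ∃ n : ℕ, h = g ^ n := by
  have : CharP (IntermediateField.adjoin K {θ}) p :=
    charP_of_injective_algebraMap (algebraMap K _).injective p
  set x := IntermediateField.AdjoinSimple.gen K θ with hx
  have hext : ∀ g₁ g₂ : IntermediateField.adjoin K {θ} ≃ₐ[K] IntermediateField.adjoin K {θ},
      g₁ x = g₂ x → g₁ = g₂ := fun g₁ g₂ h12 ↦ by
    refine AlgEquiv.coe_toAlgHom_injective (IntermediateField.adjoin_algHom_ext K fun y hy ↦ ?_)
    obtain rfl := Set.mem_singleton_iff.1 hy
    exact h12
  have hgx : g x - x ≠ 0 := fun h0 ↦ hg (hext g 1 (sub_eq_zero.1 h0))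
  obtain ⟨n, hn⟩ := exists_natCast_of_pow_eq p (x := (h x - x) / (g x - x))
    (by rw [div_pow, hθ, hθ])
  obtain ⟨m, hm⟩ := exists_natCast_of_pow_eq p (hθ g)
  have hpow : ∀ k : ℕ, (g ^ k) x = x + k * (g x - x) := fun k ↦ by
    induction k with
    | zero => simp
    | succ k ih =>
      rw [pow_succ', AlgEquiv.mul_apply, ih, hm, map_add, map_mul, map_natCast, map_natCast, ← hm]
      push_cast
      ring
  refine ⟨n, hext _ _ ?_⟩
  rw [hpow, ← hn, div_mul_cancel₀ _ hgx]
  ring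

/-! ### Invariant valuations on finite Galois extensions -/

section
variable {K F : Type*} [Field K] [Field F] [Algebra K F] [FiniteDimensional K F]
  {Γ : Type*} [LinearOrderedCommGroupWithZero Γ] (v : Valuation F Γ)

/-- If `v` takes different values on two conjugates of `y`, some `u` strictly dominates all its
other conjugates. With `S` the set of automorphisms `s` maximizing `v (s y)`, the element
`u = ∏ s ∈ S, s y` works: `v (g u) = v u` would force `g S = S`, hence `S` would be the whole
group. -/
theorem exists_dominating
    (hcyc : ∀ g : F ≃ₐ[K] F, g ≠ 1 → ∀ h : F ≃ₐ[K] F, ∃ n : ℕ, h = g ^ n)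
    (y : F) (h₀ : F ≃ₐ[K] F) (hy : v (h₀ y) ≠ v y) :
    ∃ u : F, u ≠ 0 ∧ ∀ g : F ≃ₐ[K] F, g ≠ 1 → v (g u) < v u := by
  classical
  have hy0 : y ≠ 0 := by rintro rfl; simp at hy
  obtain ⟨g₀, hg₀⟩ := Finite.exists_max (fun g : F ≃ₐ[K] F ↦ v (g y))
  set S : Finset (F ≃ₐ[K] F) := Finset.univ.filter fun g ↦ v (g y) = v (g₀ y) with hS
  refine ⟨∏ s ∈ S, s y, Finset.prod_ne_zero_iff.2 fun s _ ↦ by simpa using hy0, fun g hg ↦ ?_⟩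
  rw [map_prod, map_prod, map_prod]
  refine Finset.prod_lt_prod (fun s _ ↦ ?_) (fun s hs ↦ ?_) ?_
  · simpa [zero_lt_iff] using hy0
  · rw [(Finset.mem_filter.1 hs).2]
    exact hg₀ (g * s)
  · by_contra! hcon
    have hstab : ∀ s ∈ S, g * s ∈ S := fun s hs ↦ by
      have h1 := hcon s hs
      rw [(Finset.mem_filter.1 hs).2] at h1
      exact Finset.mem_filter.2 ⟨Finset.mem_univ _, le_antisymm (hg₀ (g * s)) h1⟩
    have hpow : ∀ n : ℕ, g ^ n * g₀ ∈ S := fun n ↦ by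
      induction n with
      | zero => simp [hS]
      | succ n ih => rw [pow_succ', mul_assoc]; exact hstab _ ih
    have hall : ∀ h : F ≃ₐ[K] F, v (h y) = v (g₀ y) := fun h ↦ by
      obtain ⟨n, hn⟩ := hcyc g hg (h * g₀⁻¹)
      have := hpow n
      rw [← hn, inv_mul_cancel_right] at this
      exact (Finset.mem_filter.1 this).2
    exact hy ((hall h₀).trans (hall 1).symm)

/-- The element `c` is `Tr(u θ) / Tr(u)`: the trace of `u` has the value of `u`, and
`Tr(u θ) - Tr(u) θ = ∑ g, g u * (g θ - θ)`. -/
theorem exists_approx [IsGalois K F] (u : F) (hu0 : u ≠ 0)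
    (hu : ∀ g : F ≃ₐ[K] F, g ≠ 1 → v (g u) < v u) (θ : F)
    (hθ : ∀ g : F ≃ₐ[K] F, v (g θ - θ) ≤ 1) :
    ∃ c : K, v (θ - algebraMap K F c) ≤ 1 := by
  classical
  have hfix : ∀ x : F, ∃ t : K, algebraMap K F t = ∑ g : F ≃ₐ[K] F, g x := fun x ↦ by
    refine (IsGalois.mem_range_algebraMap_iff_fixed (F := K) (E := F) _).2 fun f ↦ ?_
    rw [map_sum]
    exact Fintype.sum_equiv (Equiv.mulLeft f) _ _ fun g ↦ rfl
  obtain ⟨t, ht⟩ := hfix u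
  obtain ⟨s, hs⟩ := hfix (u * θ)
  have hvu : 0 < v u := by simpa [zero_lt_iff] using hu0
  have hvt : v (algebraMap K F t) = v u := by
    rw [ht, ← Finset.add_sum_erase _ _ (Finset.mem_univ 1)]
    refine v.map_add_eq_of_lt_left (v.map_sum_lt' hvu fun g hg ↦ hu g (Finset.ne_of_mem_erase hg))
  have ht0 : algebraMap K F t ≠ 0 := fun h ↦ by
    rw [h, map_zero] at hvt
    exact hvu.ne hvt
  have hst : v (algebraMap K F s - algebraMap K F t * θ) ≤ v u := by
    rw [hs, ht, Finset.sum_mul, ← Finset.sum_sub_distrib]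
    refine v.map_sum_le fun g _ ↦ ?_
    rw [map_mul, ← mul_sub, map_mul]
    have h1 : v (g u) ≤ v u := by
      by_cases hg : g = 1
      · simp [hg]
      · exact (hu g hg).le
    exact (mul_le_mul' h1 (hθ g)).trans (mul_one _).le
  refine ⟨s / t, ?_⟩
  have : θ - algebraMap K F (s / t) =
      -((algebraMap K F s - algebraMap K F t * θ) / algebraMap K F t) := by
    rw [map_div₀]
    field_simp
    ring
  rw [this, Valuation.map_neg, map_div₀, hvt]
  exact div_le_one_of_le₀ hst zero_le

open Polynomial in
/-- A Galois-invariant valuation on a finite Galois extension is the only extension of its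
restriction to the base field. -/
theorem uniqueExtension_of_invariant [IsGalois K F]
    (hinv : ∀ (g : F ≃ₐ[K] F) (y : F), v (g y) = v y) : UniqueExtension K F v := by
  classical
  intro R hR
  have hR' : ∀ c : K, algebraMap K F c ∈ R ↔ v (algebraMap K F c) ≤ 1 := fun c ↦ by
    have := SetLike.ext_iff.1 hR c
    exact this
  have hfix := fun x ↦ (IsGalois.mem_range_algebraMap_iff_fixed (F := K) (E := F) x).2
  have hle : ∀ x, v x ≤ 1 → x ∈ R := fun x hx ↦ by
    -- the coefficients of `∏ g, (X - g x)` are integral for `v` and lie in `K`, hence in `R`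
    set P := MulSemiringAction.charpoly (F ≃ₐ[K] F) x with hP
    have hPO : P ∈ lifts (algebraMap v.integer F) := by
      rw [hP, MulSemiringAction.charpoly_eq]
      refine prod_mem fun g _ ↦ ?_
      rw [sub_eq_add_neg, ← C_neg]
      refine add_mem (X_mem_lifts _) ?_
      exact C_mem_lifts (algebraMap v.integer F) ⟨-g x, by
        rw [Valuation.mem_integer_iff, Valuation.map_neg, hinv]; exact hx⟩
    have hPR : P ∈ lifts (algebraMap R F) := by
      rw [lifts_iff_coeff_lifts] at hPO ⊢
      intro n
      obtain ⟨c, hc⟩ := hfix _ fun g ↦ MulSemiringAction.smul_coeff_charpoly x n g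
      obtain ⟨⟨o, ho⟩, hoc⟩ := hPO n
      have hcR : algebraMap K F c ∈ R := by
        rw [hR', hc]
        change v (P.coeff n) ≤ 1
        rw [← hoc]
        exact ho
      exact ⟨⟨_, hcR⟩, hc⟩
    obtain ⟨Q, hQ, -, hQm⟩ := lifts_and_natDegree_eq_and_monic hPR
      (MulSemiringAction.monic_charpoly _ _)
    have hint : IsIntegral R x := ⟨Q, hQm, by
      rw [← eval_map, hQ, hP, MulSemiringAction.eval_charpoly]⟩
    obtain ⟨y, rfl⟩ := IsIntegrallyClosed.isIntegral_iff.1 hint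
    exact y.2
  ext x
  rw [Valuation.mem_valuationSubring_iff]
  refine ⟨fun hx ↦ ?_, hle x⟩
  -- otherwise the norm of `x`, which is a `v`-unit times a power of `x`, would be in `R ∩ K`,
  -- although its value is greater than one
  by_contra! hlt
  have hx0 : x ≠ 0 := by rintro rfl; simp at hlt
  obtain ⟨n, hn⟩ := hfix (∏ g : F ≃ₐ[K] F, g x) fun f ↦ by
    rw [map_prod]
    exact Fintype.prod_equiv (Equiv.mulLeft f) _ _ fun g ↦ rfl
  set m := Fintype.card (F ≃ₐ[K] F)
  have hvn : v (algebraMap K F n) = v x ^ m := by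
    rw [hn, map_prod, Finset.prod_congr rfl fun g _ ↦ hinv g x, Finset.prod_const,
      Finset.card_univ]
  have hunit : algebraMap K F n / x ^ m ∈ R := hle _ (by
    rw [map_div₀, hvn, map_pow]; exact div_self_le_one _)
  have hnR : algebraMap K F n ∈ R := by
    have := mul_mem hunit (pow_mem hx m)
    rwa [div_mul_cancel₀ _ (pow_ne_zero _ hx0)] at this
  rw [hR', hvn] at hnR
  exact (one_lt_pow₀ hlt Fintype.card_ne_zero).not_ge hnR

end

/-! ### Unique extension to `K(θ)` -/

/-- If `θ ^ p - θ ∈ K` and no element of `K` is at distance at most one from `θ`, then `v`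
extends uniquely from `K` to `K(θ)`. -/
theorem uniqueExtension_of_artinSchreier {K Ω : Type*} [Field K] [Field Ω] [Algebra K Ω]
    {Γ : Type*} [LinearOrderedCommGroupWithZero Γ] (v : Valuation Ω Γ)
    (p : ℕ) [Fact p.Prime] [CharP K p] (θ : Ω) (b : K) (hθ : θ ^ p - θ = algebraMap K Ω b)
    (hfar : ∀ c : K, 1 < v (θ - algebraMap K Ω c)) :
    UniqueExtension K (IntermediateField.adjoin K {θ})
      (v.comap (algebraMap (IntermediateField.adjoin K {θ}) Ω)) := by
  have hp : p.Prime := Fact.out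
  obtain ⟨_, _⟩ := isGalois_adjoin p θ b hθ
  have : CharP (IntermediateField.adjoin K {θ}) p :=
    charP_of_injective_algebraMap (algebraMap K _).injective p
  set x := IntermediateField.AdjoinSimple.gen K θ with hx
  have hxb : x ^ p - x = algebraMap K _ b := Subtype.ext hθ
  have hpow : ∀ g : IntermediateField.adjoin K {θ} ≃ₐ[K] IntermediateField.adjoin K {θ},
      (g x - x) ^ p = g x - x := fun g ↦ by
    have h1 := congrArg g hxb
    rw [AlgEquiv.commutes, map_sub, map_pow] at h1
    rw [sub_pow_char]
    linear_combination h1 - hxb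
  refine uniqueExtension_of_invariant _ fun g y ↦ ?_
  by_contra hne
  obtain ⟨u, hu0, hu⟩ := exists_dominating _ (exists_pow_eq p θ hpow) y g hne
  obtain ⟨c, hc⟩ := exists_approx _ u hu0 hu x fun g ↦ by
    -- an element with `z ^ p = z` has value at most one
    by_contra! hlt
    have h1 := congrArg (v.comap (algebraMap (IntermediateField.adjoin K {θ}) Ω)) (hpow g)
    rw [map_pow] at h1
    exact (lt_self_pow₀ hlt hp.one_lt).ne' h1
  exact (hfar c).not_ge hc

/-- Let `(K,v)` be a valued field of characteristic `p > 0` and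
`(K(η)|K,v)` a purely inseparable extension of degree `p` with `η^p ∈ K` (rendered as
`η ∉ K`, `η^p ∈ K`) such that `v(η−K)` is bounded above by an element of `vK`.
Let `d ∈ K` (nonzero, so that `vd ∈ vK`) satisfy `(p−1)·vd > p·α − vη` for all
`α ∈ v(η−K)`, and let `θ̃_d` be a root of `Y^p − d^(p−1)·Y − η^p`.  Then
`θ_d := θ̃_d/d` is a root of `X^p − X − η^p/d^p`, `K(θ_d)|K` is an Artin-Schreier
extension with a unique extension of `v` from `K` to `K(θ_d)`, and moreover:
`v(θ̃_d − K) = v(η−K)`; `v(η/d − θ_d) > v(θ_d − c)` for all `c ∈ K`; and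
`v(θ_d − K) = v(η−K) − vd`.

Everything happens in a valued extension field `(Ω,v)` of `(K,v)` containing `η` and
`θ̃_d`.  Multiplicative notation for `v` (order reversed w.r.t. the paper's additive
value groups): e.g. the hypothesis on `d` reads `(v d)^(p−1) · v η < (v (η−c))^p`
for all `c ∈ K`, and subtraction of values becomes division. -/
theorem statement15 {K Ω : Type*} [Field K] [Field Ω] [Algebra K Ω]
    {Γ : Type*} [LinearOrderedCommGroupWithZero Γ] (v : Valuation Ω Γ)
    (p : ℕ) [Fact p.Prime] [CharP K p]
    (η : Ω) (hη1 : η ∉ Set.range (algebraMap K Ω))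
    (hη2 : η ^ p ∈ Set.range (algebraMap K Ω))
    (hbdd : ∃ b : K, b ≠ 0 ∧ ∀ c : K, v (algebraMap K Ω b) ≤ v (η - algebraMap K Ω c))
    (d : K) (hd0 : d ≠ 0)
    (hd : ∀ c : K, v (algebraMap K Ω d) ^ (p - 1) * v η < v (η - algebraMap K Ω c) ^ p)
    (θt : Ω) (hθt : θt ^ p - algebraMap K Ω d ^ (p - 1) * θt - η ^ p = 0) :
    -- θ_d = θt / d is a root of the Artin-Schreier polynomial X^p − X − η^p/d^p
    ((θt / algebraMap K Ω d) ^ p - θt / algebraMap K Ω d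
        - η ^ p / algebraMap K Ω d ^ p = 0) ∧
    -- K(θ_d)|K is an Artin-Schreier extension ...
    (θt / algebraMap K Ω d ∉ Set.range (algebraMap K Ω)) ∧
    ((θt / algebraMap K Ω d) ^ p - θt / algebraMap K Ω d ∈ Set.range (algebraMap K Ω)) ∧
    -- ... with a unique extension of v from K to K(θ_d)
    UniqueExtension K (IntermediateField.adjoin K {θt / algebraMap K Ω d})
      (v.comap (algebraMap (IntermediateField.adjoin K {θt / algebraMap K Ω d}) Ω)) ∧
    -- v(θ̃_d − K) = v(η − K)
    ((Set.range fun c : K ↦ v (θt - algebraMap K Ω c)) =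
      (Set.range fun c : K ↦ v (η - algebraMap K Ω c))) ∧
    -- v(η/d − θ_d) > v(θ_d − K)  (additively; `<` multiplicatively)
    (∀ c : K, v (η / algebraMap K Ω d - θt / algebraMap K Ω d) <
      v (θt / algebraMap K Ω d - algebraMap K Ω c)) ∧
    -- v(θ_d − K) = v(η − K) − vd
    ((Set.range fun c : K ↦ v (θt / algebraMap K Ω d - algebraMap K Ω c)) =
      (fun γ : Γ ↦ γ / v (algebraMap K Ω d)) ''
        (Set.range fun c : K ↦ v (η - algebraMap K Ω c))) := by
  have hp : p.Prime := Fact.out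
  have : CharP Ω p := charP_of_injective_algebraMap (algebraMap K Ω).injective p
  set D := algebraMap K Ω d with hD
  have hD0 : D ≠ 0 := by simpa [hD] using hd0
  have hvD : 0 < v D := by simpa [zero_lt_iff] using hD0
  have hη0 : η ≠ 0 := by rintro rfl; exact hη1 ⟨0, map_zero _⟩
  have hvη : 0 < v η := by simpa [zero_lt_iff] using hη0
  have hp1 : p - 1 + 1 = p := Nat.sub_add_cancel hp.one_le
  have hDpow : D ^ (p - 1) * D = D ^ p := by rw [← pow_succ, hp1]
  have hpow : ∀ γ : Γ, γ ^ (p - 1) * γ = γ ^ p := fun γ ↦ by rw [← pow_succ, hp1]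
  have hpm : p - 1 ≠ 0 := by have := hp.two_le; omega
  have hroot : (θt / D) ^ p - θt / D - η ^ p / D ^ p = 0 := by
    have h1 : θt / D = D ^ (p - 1) * θt / D ^ p := by
      rw [← hDpow]; field_simp
    rw [div_pow, h1, ← sub_div, ← sub_div, hθt, zero_div]
  -- the case `c = 0` of the hypothesis on `d`
  have hDη : v D < v η := by
    have h0 := hd 0
    rw [map_zero, sub_zero, ← hpow (v η)] at h0
    exact lt_of_pow_lt_pow_left₀ _ zero_le (lt_of_mul_lt_mul_right h0 zero_le)
  have hTη : (θt - η) ^ p = D ^ (p - 1) * θt := by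
    rw [sub_pow_char]; linear_combination hθt
  have hvTη : v (θt - η) ^ p = v D ^ (p - 1) * v θt := by
    rw [← map_pow, hTη, map_mul, map_pow]
  have hvT : v θt = v η := by
    rcases lt_trichotomy (v θt) (v η) with h | h | h
    · rw [v.map_sub_eq_of_lt_right h, ← hpow] at hvTη
      exact absurd hvTη (mul_lt_mul'' (pow_lt_pow_left₀ hDη zero_le hpm) h zero_le zero_le).ne'
    · exact h
    · rw [v.map_sub_eq_of_lt_left h, ← hpow] at hvTη
      have h2 := (pow_left_inj₀ zero_le zero_le hpm).1
        (mul_right_cancel₀ (hvη.trans h).ne' hvTη)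
      exact absurd (h.trans_eq h2) hDη.not_gt
  rw [hvT] at hvTη
  have hclose : ∀ c : K, v (θt - η) < v (η - algebraMap K Ω c) := fun c ↦
    lt_of_pow_lt_pow_left₀ p zero_le (hvTη.trans_lt (hd c))
  have hval : ∀ c : K, v (θt - algebraMap K Ω c) = v (η - algebraMap K Ω c) := fun c ↦ by
    rw [← sub_add_sub_cancel θt η, v.map_add_eq_of_lt_right (hclose c)]
  have hDTη : v D < v (θt - η) := by
    refine lt_of_pow_lt_pow_left₀ p zero_le ?_
    rw [hvTη, ← hpow]
    exact mul_lt_mul_of_pos_left hDη (pow_pos hvD _)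
  have hsub : ∀ c : K, θt / D - algebraMap K Ω c = (θt - algebraMap K Ω (c * d)) / D := fun c ↦ by
    rw [map_mul, ← hD]; field_simp
  have hvsub : ∀ c : K, v (θt / D - algebraMap K Ω c) = v (η - algebraMap K Ω (c * d)) / v D :=
    fun c ↦ by rw [hsub, map_div₀, hval]
  have hfar : ∀ c : K, 1 < v (θt / D - algebraMap K Ω c) := fun c ↦ by
    rw [hvsub, one_lt_div₀ hvD]
    exact hDTη.trans (hclose _)
  obtain ⟨a, ha⟩ := hη2
  have hAS : (θt / D) ^ p - θt / D = algebraMap K Ω (a / d ^ p) := by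
    rw [map_div₀, map_pow, ha]; exact sub_eq_zero.1 hroot
  refine ⟨hroot, ?_, ⟨_, hAS.symm⟩, ?_, ?_, ?_, ?_⟩
  · rintro ⟨c, hc⟩
    have := hfar c
    rw [hc, sub_self, map_zero] at this
    exact this.not_ge zero_le
  · exact uniqueExtension_of_artinSchreier v p _ _ hAS hfar
  · simp only [hval]
  · intro c
    rw [hvsub, ← sub_div, map_div₀, v.map_sub_swap]
    exact div_lt_div_of_pos_right (hclose _) hvD
  · ext γ
    simp only [hvsub, Set.mem_range, Set.mem_image, exists_exists_eq_and]
    refine ⟨fun ⟨c, hc⟩ ↦ ⟨c * d, hc⟩, fun ⟨c, hc⟩ ↦ ⟨c / d, ?_⟩⟩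
    rwa [div_mul_cancel₀ _ hd0]

end Statement15
end

section
/- Let (K,v) be a valued field of characteristic p > 0 and (K(η)|K,v) a purely inseparable extension of degree p with η^p ∈ K such that v(η−K) is bounded above by an element of vK. Suppose α ∈ v(η−K) and d ∈ K satisfy α + vd > v(η−c) for all c ∈ K, and (p−1)·vd > p·β − vη for all β ∈ v(η−K). For each n ∈ ℕ let θ_{d^n} be a root of the Artin-Schreier polynomial X^p − X − η^p/d^{np}. Then the Artin-Schreier extensions K(θ_{d^n})|K, n ∈ ℕ, are pairwise distinct, and for every n the extension of v from K to K(θ_{d^n}) is unique. -/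
/-!
Write `x n = d ^ n * θ n`. Since `(x n - η) ^ p = d ^ (n p) θ n`, the second hypothesis on `d` says
that `x n` is closer to `η` than every element of `K` is (`approx_pow_le`). Hence
`v (x n - c) = v (η - c)` for all `c ∈ K`, and in particular `θ n ∉ K`.

*Distinctness.* If `K(θ m) = K(θ n)` with `m < n`, then `θ n = k θ m + c` with `k` in the prime
field and `c ∈ K` (`exists_eq_mul_add`), so `x n = k d ^ (n - m) x m + d ^ n c`. Replacing `x m` by
an element `c₀ ∈ K` with `v (η - c₀) = α` gives an element of `K` at distance at most `v d * α`
from `x n`, hence also from `η`, which the first hypothesis on `d` forbids.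

*Uniqueness.* All conjugates of `x n` lie within `v (d ^ n)` of `x n`, which is closer than any
element of `K`. If `v` were not invariant under the Galois group `G`, which has prime order, there
would be an element `y` strictly larger than all its proper conjugates
(`exists_dominant_conjugate`). The weighted average `Tr (x n * y) / Tr y ∈ K` of the conjugates of
`x n` would then lie within `v (d ^ n)` of `x n`, a contradiction (`map_eq_of_conjugates_close`).
A `G`-invariant valuation is the only extension of its restriction to `K`
(`uniqueExtension_of_invariant`).
-/

namespace Statement16

/-- The extension of the valuation `v` from `K` to `F` is unique: there is exactly one
valuation ring of `F` lying over the valuation ring of the restriction of `v` to `K`,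
namely that of `v`.  (Valuation subrings of `F` whose preimage in `K` is the valuation
ring of `v|K` correspond exactly to the extensions of `v|K` to `F`, up to equivalence.) -/
def UniqueExtension (K F : Type*) [Field K] [Field F] [Algebra K F]
    {Γ : Type*} [LinearOrderedCommGroupWithZero Γ] (v : Valuation F Γ) : Prop :=
  ∀ R : ValuationSubring F,
    R.toSubring.comap (algebraMap K F) = (v.comap (algebraMap K F)).integer →
    R = v.valuationSubring

section Auxiliary

open IntermediateField Polynomial

/-! ### Artin-Schreier extensions -/

section ArtinSchreier

variable {K F : Type*} [Field K] [Field F] [Algebra K F] (p : ℕ) [Fact p.Prime] [CharP K p]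

/-- In characteristic `p`, the solutions of `t ^ p = t` form the prime field, so they lie in any
subfield. -/
lemma mem_range_of_pow_eq_self {t : F} (ht : t ^ p = t) : t ∈ Set.range (algebraMap K F) := by
  have : CharP F p := charP_of_injective_algebraMap (algebraMap K F).injective p
  have h1 : t ∈ (⊥ : Subfield F) := (Subfield.mem_bot_iff_pow_eq_self F p).2 ht
  exact (bot_le : (⊥ : Subfield F) ≤ (algebraMap K F).fieldRange) h1

/-- An automorphism moves a root of an Artin-Schreier polynomial by an element of the prime
field. -/
lemma sub_pow_eq_self {θ : F} {b : K} (hb : θ ^ p - θ = algebraMap K F b) (τ : Gal(F/K)) :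
    (τ θ - θ) ^ p = τ θ - θ := by
  have : CharP F p := charP_of_injective_algebraMap (algebraMap K F).injective p
  have h := congrArg τ hb
  rw [map_sub, map_pow, AlgEquiv.commutes, ← hb] at h
  rw [sub_pow_char]
  linear_combination h

/-- The Artin-Schreier polynomial is separable, and it splits because its roots are the
translates of `θ` by the prime field. -/
lemma isGalois_of_artinSchreier {θ : F} {b : K} (hb : θ ^ p - θ = algebraMap K F b)
    (htop : K⟮θ⟯ = ⊤) : FiniteDimensional K F ∧ IsGalois K F := by
  have : CharP F p := charP_of_injective_algebraMap (algebraMap K F).injective p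
  have hp : p.Prime := Fact.out
  have hmap : (X ^ p - X - C b : K[X]).map (algebraMap K F)
      = (X ^ p - X : F[X]).comp (X - C θ) := by
    simp only [Polynomial.map_sub, Polynomial.map_pow, map_X, map_C, sub_comp, pow_comp, X_comp]
    rw [← hb, sub_pow_char, C_sub, C_pow]
    ring
  have hsep : (X ^ p - X - C b : K[X]).Separable := by
    have hd : derivative (X ^ p - X - C b : K[X]) = -1 := by
      simp [derivative_X_pow]
    rw [separable_def, hd]
    exact isCoprime_one_right.neg_right
  have hne : (X ^ p - X - C b : K[X]).map (algebraMap K F) ≠ 0 :=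
    Polynomial.map_ne_zero hsep.ne_zero
  have hsplit : (X ^ p - X : F[X]).Splits := by
    have h := (Subfield.splits_bot F p).map (Subfield.subtype _)
    simpa using h
  have : IsSplittingField K F (X ^ p - X - C b : K[X]) := by
    rw [isSplittingField_iff_intermediateField]
    refine ⟨?_, ?_⟩
    · rw [hmap]
      exact hsplit.comp_of_natDegree_le_one_of_monic (natDegree_X_sub_C_le θ) (monic_X_sub_C θ)
    · rw [eq_top_iff, ← htop, adjoin_simple_le_iff]
      apply subset_adjoin
      rw [mem_rootSet']
      refine ⟨hne, ?_⟩
      simp [hb]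
  exact ⟨IsSplittingField.finiteDimensional F (X ^ p - X - C b : K[X]),
    IsGalois.of_separable_splitting_field hsep⟩

lemma algEquiv_eq_one {θ : F} (htop : K⟮θ⟯ = ⊤) {τ : Gal(F/K)} (h : τ θ = θ) : τ = 1 := by
  have hle : K⟮θ⟯ ≤ fixedField (Subgroup.zpowers τ) := by
    rw [adjoin_simple_le_iff, mem_fixedField_iff]
    intro f hf
    exact MulAction.mem_stabilizer_iff.1
      ((Subgroup.zpowers_le.2 (MulAction.mem_stabilizer_iff.2 h)) hf)
  rw [htop] at hle
  ext x
  exact (mem_fixedField_iff _ _).1 (hle mem_top) τ (Subgroup.mem_zpowers τ)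

/-- The map `τ ↦ τ θ - θ` embeds the Galois group into the prime field, so a nontrivial
Artin-Schreier extension has a Galois group of order `p`. -/
lemma card_gal_of_artinSchreier {θ : F} {b : K} (hb : θ ^ p - θ = algebraMap K F b)
    (htop : K⟮θ⟯ = ⊤) (hθ : θ ∉ Set.range (algebraMap K F)) : Nat.card Gal(F/K) = p := by
  have : CharP F p := charP_of_injective_algebraMap (algebraMap K F).injective p
  obtain ⟨_, _⟩ := isGalois_of_artinSchreier p hb htop
  have hmem (τ : Gal(F/K)) : τ θ - θ ∈ (⊥ : Subfield F) :=
    (Subfield.mem_bot_iff_pow_eq_self F p).2 (sub_pow_eq_self p hb τ)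
  have hfix (τ σ : Gal(F/K)) : σ (τ θ - θ) = τ θ - θ := by
    obtain ⟨c, hc⟩ := mem_range_of_pow_eq_self (K := K) p (sub_pow_eq_self p hb τ)
    rw [← hc, AlgEquiv.commutes]
  let φ : Gal(F/K) →* Multiplicative (⊥ : Subfield F) :=
    { toFun := fun τ ↦ Multiplicative.ofAdd ⟨τ θ - θ, hmem τ⟩
      map_one' := by
        apply Multiplicative.toAdd.injective
        ext
        simp
      map_mul' := fun σ τ ↦ by
        apply Multiplicative.toAdd.injective
        ext
        have h := hfix τ σ
        rw [map_sub] at h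
        simp only [AlgEquiv.mul_apply, toAdd_ofAdd, toAdd_mul, Subfield.coe_add]
        linear_combination h }
  have hφ : Function.Injective φ := by
    rw [injective_iff_map_eq_one]
    intro τ hτ
    have h := congrArg (fun z ↦ ((Multiplicative.toAdd z : (⊥ : Subfield F)) : F)) hτ
    exact algEquiv_eq_one htop (sub_eq_zero.1 h)
  have hdvd : Nat.card Gal(F/K) ∣ p := by
    have h := Subgroup.card_dvd_of_injective φ hφ
    rwa [Nat.card_congr Multiplicative.toAdd, Subfield.card_bot F p] at h
  refine ((Nat.dvd_prime Fact.out).1 hdvd).resolve_left fun h1 ↦ hθ ?_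
  rw [IsGalois.mem_range_algebraMap_iff_fixed]
  intro τ
  have := (Nat.card_eq_one_iff_unique.1 h1).1
  rw [Subsingleton.elim τ 1, AlgEquiv.one_apply]

/-- Two Artin-Schreier elements of the same nontrivial Artin-Schreier extension differ, up to
a factor from the prime field, by an element of `K`: the factor is chosen so that a generator
of the Galois group fixes the difference. -/
lemma exists_eq_mul_add {θ θ' : F} {b b' : K} (hb : θ ^ p - θ = algebraMap K F b)
    (hb' : θ' ^ p - θ' = algebraMap K F b') (htop : K⟮θ⟯ = ⊤)
    (hθ : θ ∉ Set.range (algebraMap K F)) :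
    ∃ k c : K, k ^ p = k ∧ θ' = algebraMap K F k * θ + algebraMap K F c := by
  obtain ⟨_, _⟩ := isGalois_of_artinSchreier p hb htop
  have hcard := card_gal_of_artinSchreier p hb htop hθ
  obtain ⟨τ, hτ⟩ : ∃ τ : Gal(F/K), τ θ ≠ θ := by
    by_contra! h
    exact hθ ((IsGalois.mem_range_algebraMap_iff_fixed θ).2 h)
  have hτ1 : τ ≠ 1 := by rintro rfl; exact hτ rfl
  obtain ⟨j, hj⟩ := mem_range_of_pow_eq_self (K := K) p (sub_pow_eq_self p hb τ)
  obtain ⟨k, hk⟩ := mem_range_of_pow_eq_self (K := K) p (sub_pow_eq_self p hb' τ)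
  have hj0 : algebraMap K F j ≠ 0 := by rw [hj]; exact sub_ne_zero.2 hτ
  have hjp : j ^ p = j := (algebraMap K F).injective (by
    rw [map_pow, hj]; exact sub_pow_eq_self p hb τ)
  have hkp : k ^ p = k := (algebraMap K F).injective (by
    rw [map_pow, hk]; exact sub_pow_eq_self p hb' τ)
  have hfix : τ (θ' - algebraMap K F (k / j) * θ) = θ' - algebraMap K F (k / j) * θ := by
    rw [map_sub, map_mul, AlgEquiv.commutes, map_div₀]
    field_simp
    linear_combination (τ θ' - θ') * hj - (τ θ - θ) * hk
  have hmem : θ' - algebraMap K F (k / j) * θ ∈ Set.range (algebraMap K F) := by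
    rw [IsGalois.mem_range_algebraMap_iff_fixed]
    intro f
    have hf : f ∈ Subgroup.zpowers τ := by
      rw [zpowers_eq_top_of_prime_card hcard hτ1]; trivial
    exact MulAction.mem_stabilizer_iff.1
      ((Subgroup.zpowers_le.2 (MulAction.mem_stabilizer_iff.2 hfix)) hf)
  obtain ⟨c, hc⟩ := hmem
  exact ⟨k / j, c, by rw [div_pow, hjp, hkp], by rw [hc]; ring⟩

end ArtinSchreier

/-! ### Valuations on Galois extensions of prime degree -/

section Galois

variable {K F : Type*} [Field K] [Field F] [Algebra K F] [FiniteDimensional K F]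
  {Γ : Type*} [LinearOrderedCommGroupWithZero Γ] (v : Valuation F Γ)

open Pointwise in
/-- If `v` is not invariant under a Galois group of prime order, some element is strictly larger
than all its proper conjugates. Let `S` be the set of `g` for which `v (g f)` is maximal, where
`v` is not constant on the conjugates of `f`. Then `y = ∏ g ∈ S, g f` works: if
`v (h y) = v y`, then `h S = S`, and the stabilizer of the proper nonempty set `S` is trivial. -/
lemma exists_dominant_conjugate (hcard : (Nat.card Gal(F/K)).Prime)
    {f : F} {τ : Gal(F/K)} (hf : v (τ f) ≠ v f) :
    ∃ y : F, ∀ h : Gal(F/K), h ≠ 1 → v (h y) < v y := by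
  classical
  have : Fact (Nat.card Gal(F/K)).Prime := ⟨hcard⟩
  obtain ⟨s, -, hs⟩ := Finset.exists_max_image (Finset.univ : Finset Gal(F/K))
    (fun g ↦ v (g f)) ⟨1, Finset.mem_univ _⟩
  let S : Finset Gal(F/K) := Finset.univ.filter fun g ↦ v (g f) = v (s f)
  have hsS : s ∈ S := by simp [S]
  have hf0 : f ≠ 0 := by rintro rfl; simp at hf
  have hpos (g : Gal(F/K)) : 0 < v (g f) :=
    zero_lt_iff.2 ((Valuation.ne_zero_iff v).2 (by simpa using hf0))
  refine ⟨∏ g ∈ S, g f, fun h hh ↦ ?_⟩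
  -- some translate of an element of `S` leaves `S`
  obtain ⟨g₀, hg₀, hg₀'⟩ : ∃ g ∈ S, h * g ∉ S := by
    by_contra! hall
    have hstab : h ∈ MulAction.stabilizer Gal(F/K) S := by
      rw [MulAction.mem_stabilizer_iff]
      refine Finset.eq_of_subset_of_card_le ?_ (by simp)
      intro x hx
      obtain ⟨g, hg, rfl⟩ := Finset.mem_smul_finset.1 hx
      exact hall g hg
    rcases (MulAction.stabilizer Gal(F/K) S).eq_bot_or_eq_top_of_prime_card with h1 | h1
    · rw [h1, Subgroup.mem_bot] at hstab
      exact hh hstab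
    · have hmax (g : Gal(F/K)) : v (g f) = v (s f) := by
        have h2 : g * s⁻¹ ∈ MulAction.stabilizer Gal(F/K) S := by rw [h1]; trivial
        have h3 : (g * s⁻¹) • s ∈ (g * s⁻¹) • S := Finset.smul_mem_smul_finset hsS
        rw [MulAction.mem_stabilizer_iff.1 h2] at h3
        simpa [S] using h3
      exact hf ((hmax τ).trans (hmax 1).symm)
  rw [map_prod, map_prod, map_prod]
  refine Finset.prod_lt_prod (fun g _ ↦ ?_) (fun g hg ↦ ?_) ⟨g₀, hg₀, ?_⟩
  · exact hpos (h * g)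
  · have hg' : v (g f) = v (s f) := by simpa [S] using hg
    rw [hg']
    exact hs (h * g) (Finset.mem_univ _)
  · have hg' : v (g₀ f) = v (s f) := by simpa [S] using hg₀
    rw [hg']
    refine lt_of_le_of_ne (hs (h * g₀) (Finset.mem_univ _)) fun he ↦ hg₀' ?_
    simpa [S] using he

/-- If the conjugates of `x` are closer to `x` than every element of `K`, then `v` is invariant
under a Galois group of prime order. Otherwise there is `y` with
`v (Tr y) = v y > v (h y)` for all `h ≠ 1`, and then `Tr (x y) / Tr y` is an element of `K` that
is as close to `x` as the conjugates are. -/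
lemma map_eq_of_conjugates_close [IsGalois K F] (hcard : (Nat.card Gal(F/K)).Prime)
    {x : F} {ε : Γ} (hε : ∀ h : Gal(F/K), v (h x - x) ≤ ε)
    (hx : ∀ c : K, ε < v (x - algebraMap K F c)) (τ : Gal(F/K)) (f : F) : v (τ f) = v f := by
  classical
  by_contra hf
  obtain ⟨y, hy⟩ := exists_dominant_conjugate v hcard hf
  have htr : v (algebraMap K F (Algebra.trace K F y)) = v y := by
    rw [trace_eq_sum_automorphisms]
    simpa using v.map_sum_eq_of_lt (s := Finset.univ) (f := fun g : Gal(F/K) ↦ g y) (j := 1)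
      (Finset.mem_univ _) (fun g hg ↦ hy g (by simpa using hg))
  have hτ1 : τ ≠ 1 := by rintro rfl; exact hf rfl
  have hy0 : 0 < v y := lt_of_le_of_lt zero_le (hy τ hτ1)
  have ht0 : algebraMap K F (Algebra.trace K F y) ≠ 0 :=
    (Valuation.ne_zero_iff v).1 (by rw [htr]; exact hy0.ne')
  have hle (g : Gal(F/K)) : v (g y) ≤ v y := by
    rcases eq_or_ne g 1 with rfl | hg
    · exact le_rfl
    · exact (hy g hg).le
  have hdiff : v (algebraMap K F (Algebra.trace K F (x * y))
      - x * algebraMap K F (Algebra.trace K F y)) ≤ ε * v y := by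
    rw [trace_eq_sum_automorphisms, trace_eq_sum_automorphisms, Finset.mul_sum,
      ← Finset.sum_sub_distrib]
    refine v.map_sum_le fun g _ ↦ ?_
    rw [map_mul g, ← sub_mul, map_mul v]
    exact mul_le_mul' (hε g) (hle g)
  refine (hx (Algebra.trace K F (x * y) / Algebra.trace K F y)).not_ge ?_
  rw [map_div₀, ← mul_le_mul_iff_left₀ hy0]
  refine le_trans (le_of_eq ?_) hdiff
  rw [← htr, ← map_mul, v.map_sub_swap]
  congr 1
  field_simp

/-- A Galois-invariant valuation is the only extension of its restriction to `K`. If `v f ≤ 1`,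
then `∏ g, (X - g f)` exhibits `f` as integral over the valuation ring of `K`, so `f ∈ R`.
Conversely, let `f ∈ R`, let `n = [F : K]` and let `N` be the norm of `f`, so that `v N = v (f ^ n)`. Then `N / f ^ n`
is a unit for `v`, so it lies in `R`; hence `N ∈ R ∩ K`, and `v (f ^ n) = v N ≤ 1`. -/
lemma uniqueExtension_of_invariant [IsGalois K F] (hv : ∀ (τ : Gal(F/K)) (f : F), v (τ f) = v f) :
    UniqueExtension K F v := by
  classical
  intro R hR
  have hK (c : K) : algebraMap K F c ∈ R ↔ v (algebraMap K F c) ≤ 1 := by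
    have := SetLike.ext_iff.1 hR c
    exact this
  have hle (f : F) (hf : v f ≤ 1) : f ∈ R := by
    let P : F[X] := MulSemiringAction.charpoly Gal(F/K) f
    have hcoeff (i : ℕ) : P.coeff i ∈ R.toSubring := by
      obtain ⟨c, hc⟩ : P.coeff i ∈ Set.range (algebraMap K F) :=
        (IsGalois.mem_range_algebraMap_iff_fixed _).2
          fun g ↦ MulSemiringAction.smul_coeff_charpoly f i g
      have hv1 : P.coeff i ∈ v.integer := by
        have hlift : P ∈ lifts v.integer.subtype := by
          change MulSemiringAction.charpoly Gal(F/K) f ∈ _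
          rw [MulSemiringAction.charpoly_eq]
          refine Subsemiring.prod_mem _ fun g _ ↦ ?_
          refine Subring.sub_mem (liftsRing v.integer.subtype) (X_mem_lifts _) ?_
          exact C_mem_lifts v.integer.subtype ⟨g • f, (hv g f).trans_le hf⟩
        obtain ⟨Q, hQ⟩ := (mem_lifts _).1 hlift
        rw [← hQ, coeff_map]
        exact (Q.coeff i).2
      rw [← hc] at hv1 ⊢
      exact (hK c).2 hv1
    have hint : IsIntegral R f := by
      have hP : P ∈ lifts (algebraMap R F) :=
        (lifts_iff_coeff_lifts P).2 fun i ↦ ⟨⟨P.coeff i, hcoeff i⟩, rfl⟩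
      obtain ⟨Q, hQ, -, hmonic⟩ := lifts_and_natDegree_eq_and_monic hP
        (MulSemiringAction.monic_charpoly Gal(F/K) f)
      refine ⟨Q, hmonic, ?_⟩
      rw [eval₂_eq_eval_map, hQ]
      exact MulSemiringAction.eval_charpoly Gal(F/K) f
    obtain ⟨r, hr⟩ := IsIntegrallyClosed.isIntegral_iff.1 hint
    rw [← hr]
    exact r.2
  ext f
  rw [Valuation.mem_valuationSubring_iff]
  refine ⟨fun hf ↦ ?_, hle f⟩
  rcases eq_or_ne f 0 with rfl | hf0
  · simp
  have hn : Fintype.card Gal(F/K) ≠ 0 := Fintype.card_ne_zero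
  have hN : v (algebraMap K F (Algebra.norm K f)) = v f ^ Fintype.card Gal(F/K) := by
    rw [Algebra.norm_eq_prod_automorphisms, map_prod]
    simp [hv]
  have hvf : v f ≠ 0 := (Valuation.ne_zero_iff v).2 hf0
  have hu : algebraMap K F (Algebra.norm K f) / f ^ Fintype.card Gal(F/K) ∈ R := by
    apply hle
    rw [map_div₀, hN, map_pow, div_self (pow_ne_zero _ hvf)]
  have hNR : algebraMap K F (Algebra.norm K f) ∈ R := by
    have h := R.mul_mem _ _ hu (R.toSubring.pow_mem hf (Fintype.card Gal(F/K)))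
    rwa [div_mul_cancel₀ _ (pow_ne_zero _ hf0)] at h
  rw [hK, hN] at hNR
  exact (pow_le_one_iff hn).1 hNR

end Galois

/-! ### Approximating `η` by Artin-Schreier roots -/

section Approximation

variable {Ω : Type*} [Field Ω] {Γ : Type*} [LinearOrderedCommGroupWithZero Γ]
  (v : Valuation Ω Γ) (p : ℕ) [Fact p.Prime]

lemma map_le_one_of_pow_eq_self {t : Ω} (ht : t ^ p = t) : v t ≤ 1 := by
  by_contra! h
  have h1 := congrArg v ht
  rw [map_pow] at h1
  exact (lt_self_pow₀ h (Fact.out : p.Prime).one_lt).ne' h1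

/-- The root `t` has `v (δ ^ n * t) = v η`, and `(δ ^ n * t - η) ^ p = δ ^ (n * p) * t`. -/
lemma approx_pow_le [CharP Ω p] {η δ t : Ω} (hδ : δ ≠ 0) (hδ1 : v δ < 1) (hδη : v δ < v η) {n : ℕ}
    (hn : 0 < n) (ht : t ^ p - t - η ^ p / δ ^ (n * p) = 0) :
    v (δ ^ n * t - η) ^ p ≤ v δ ^ (p - 1) * v η := by
  have hp : p.Prime := Fact.out
  have hδn : v δ ^ n ≤ v δ := pow_le_of_le_one zero_le hδ1.le hn.ne'
  have hvδ : 0 < v δ := zero_lt_iff.2 ((Valuation.ne_zero_iff v).2 hδ)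
  have hvη : 0 < v η := hvδ.trans hδη
  have ht' : t ^ p - t = (η / δ ^ n) ^ p := by
    rw [div_pow, ← pow_mul]; exact sub_eq_zero.1 ht
  have h1 : 1 < v (η / δ ^ n) := by
    rw [map_div₀, map_pow, one_lt_div₀ (pow_pos hvδ n)]
    exact hδn.trans_lt hδη
  have htgt : 1 < v t := by
    by_contra! hle
    have h2 : v (t ^ p - t) ≤ 1 :=
      v.map_sub_le (by rw [map_pow]; exact pow_le_one' hle p) hle
    rw [ht', map_pow] at h2
    exact (one_lt_pow₀ h1 hp.ne_zero).not_ge h2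
  have hvt : v t = v (η / δ ^ n) := by
    have h2 : v (t ^ p - t) = v (t ^ p) := v.map_sub_eq_of_lt_left (by
      rw [map_pow]; exact lt_self_pow₀ htgt hp.one_lt)
    rw [ht', map_pow, map_pow] at h2
    exact ((pow_left_inj₀ zero_le zero_le hp.ne_zero).1 h2).symm
  have hmul : v δ ^ n * v t = v η := by
    rw [hvt, map_div₀, map_pow, mul_div_cancel₀ _ (pow_pos hvδ n).ne']
  have hpow : (δ ^ n * t - η) ^ p = δ ^ (n * p) * t := by
    rw [sub_pow_char, mul_pow, ← pow_mul]
    have h3 : δ ^ (n * p) ≠ 0 := pow_ne_zero _ hδ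
    field_simp at ht
    linear_combination ht
  obtain ⟨q, rfl⟩ : ∃ q, p = q + 1 := ⟨p - 1, (Nat.succ_pred_prime hp).symm⟩
  rw [← map_pow, hpow, map_mul, map_pow, Nat.add_sub_cancel, mul_add, mul_one, pow_add, mul_assoc,
    hmul, pow_mul]
  exact mul_le_mul_left (pow_le_pow_left' hδn q) _

end Approximation

end Auxiliary

/-- Let `(K,v)` be a valued field of characteristic `p > 0` and
`(K(η)|K,v)` a purely inseparable extension of degree `p` with `η^p ∈ K` (rendered as
`η ∉ K`, `η^p ∈ K`) such that `v(η−K)` is bounded above by an element of `vK`.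
Suppose `α ∈ v(η−K)` and `d ∈ K` (nonzero) satisfy `α + vd > v(η−c)` for all `c ∈ K`
and `(p−1)·vd > p·β − vη` for all `β ∈ v(η−K)`.  For each `n ≥ 1` let `θ_{d^n}` be a
root of the Artin-Schreier polynomial `X^p − X − η^p/d^{np}`.  Then the Artin-Schreier
extensions `K(θ_{d^n})|K`, `n ≥ 1`, are pairwise distinct, and for every `n ≥ 1` the
extension of `v` from `K` to `K(θ_{d^n})` is unique.

Everything happens inside a valued extension field `(Ω,v)` of `(K,v)`.  Multiplicative
notation (order reversed w.r.t. the paper's additive value groups): `α + vd > v(η−c)`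
reads `α · v d < v (η − c)`, and `(p−1)·vd > p·β − vη` reads
`(v d)^(p−1) · v η < (v (η−c))^p`. -/
theorem statement16 {K Ω : Type*} [Field K] [Field Ω] [Algebra K Ω]
    {Γ : Type*} [LinearOrderedCommGroupWithZero Γ] (v : Valuation Ω Γ)
    (p : ℕ) [Fact p.Prime] [CharP K p]
    (η : Ω) (hη1 : η ∉ Set.range (algebraMap K Ω))
    (hη2 : η ^ p ∈ Set.range (algebraMap K Ω))
    (hbdd : ∃ b : K, b ≠ 0 ∧ ∀ c : K, v (algebraMap K Ω b) ≤ v (η - algebraMap K Ω c))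
    (α : Γ) (hα : α ∈ Set.range fun c : K ↦ v (η - algebraMap K Ω c))
    (d : K) (hd0 : d ≠ 0)
    (hαd : ∀ c : K, α * v (algebraMap K Ω d) < v (η - algebraMap K Ω c))
    (hd : ∀ c : K, v (algebraMap K Ω d) ^ (p - 1) * v η < v (η - algebraMap K Ω c) ^ p)
    (θ : ℕ → Ω)
    (hθ : ∀ n : ℕ, 0 < n →
      θ n ^ p - θ n - η ^ p / algebraMap K Ω d ^ (n * p) = 0) :
    -- each K(θ_{d^n})|K is a (nontrivial) Artin-Schreier extension ...
    (∀ n : ℕ, 0 < n → θ n ∉ Set.range (algebraMap K Ω)) ∧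
    -- ... and they are pairwise distinct ...
    (∀ m n : ℕ, 0 < m → 0 < n →
      IntermediateField.adjoin K {θ m} = IntermediateField.adjoin K {θ n} → m = n) ∧
    -- ... with a unique extension of v from K to each of them
    (∀ n : ℕ, 0 < n → UniqueExtension K (IntermediateField.adjoin K {θ n})
      (v.comap (algebraMap (IntermediateField.adjoin K {θ n}) Ω))) := by
  have : CharP Ω p := charP_of_injective_algebraMap (algebraMap K Ω).injective p
  have hp : p.Prime := Fact.out
  set δ : Ω := algebraMap K Ω d with hδdef
  obtain ⟨c₀, rfl⟩ := hα
  simp only at hαd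
  have hδ : δ ≠ 0 := by rw [hδdef]; simpa using hd0
  have hvδ : 0 < v δ := zero_lt_iff.2 ((Valuation.ne_zero_iff v).2 hδ)
  have hsub (c : K) : 0 < v (η - algebraMap K Ω c) :=
    zero_lt_iff.2 ((Valuation.ne_zero_iff v).2 (sub_ne_zero.2 fun h ↦ hη1 ⟨c, h.symm⟩))
  have hvη : 0 < v η := by simpa using hsub 0
  have hδ1 : v δ < 1 := by
    by_contra! h
    exact (hαd c₀).not_ge (le_mul_of_one_le_right' h)
  have hp1 : p - 1 ≠ 0 := Nat.sub_ne_zero_of_lt hp.one_lt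
  have hpp (a : Γ) : a ^ p = a ^ (p - 1) * a := by
    rw [← pow_succ, Nat.sub_add_cancel hp.one_lt.le]
  have hδη : v δ < v η := by
    have h := hd 0
    rw [map_zero, sub_zero, hpp, mul_lt_mul_iff_left₀ hvη] at h
    exact lt_of_pow_lt_pow_left₀ _ zero_le h
  have hδc (c : K) : v δ < v (η - algebraMap K Ω c) := by
    refine lt_of_pow_lt_pow_left₀ p zero_le (lt_trans ?_ (hd c))
    rw [hpp]
    exact mul_lt_mul_of_pos_left hδη (pow_pos hvδ _)
  have hnear (n : ℕ) (hn : 0 < n) (c : K) : v (δ ^ n * θ n - η) < v (η - algebraMap K Ω c) :=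
    lt_of_pow_lt_pow_left₀ p zero_le
      ((approx_pow_le v p hδ hδ1 hδη hn (hθ n hn)).trans_lt (hd c))
  have heq (n : ℕ) (hn : 0 < n) (c : K) :
      v (δ ^ n * θ n - algebraMap K Ω c) = v (η - algebraMap K Ω c) := by
    rw [← sub_add_sub_cancel _ η]
    exact v.map_add_eq_of_lt_right (hnear n hn c)
  have hnot (n : ℕ) (hn : 0 < n) : θ n ∉ Set.range (algebraMap K Ω) := by
    rintro ⟨c, hc⟩
    have h := heq n hn (d ^ n * c)
    rw [map_mul, map_pow, hc, sub_self, map_zero] at h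
    have h' := hsub (d ^ n * c)
    rw [map_mul, map_pow, hc] at h'
    exact h'.ne h
  obtain ⟨a, ha⟩ := hη2
  have hAS (n : ℕ) (hn : 0 < n) : θ n ^ p - θ n = algebraMap K Ω (a / d ^ (n * p)) := by
    rw [map_div₀, map_pow, ha]
    exact sub_eq_zero.1 (hθ n hn)
  -- the Artin-Schreier data inside an intermediate field generated by `θ n`
  have htop (n : ℕ) : IntermediateField.adjoin K
      {IntermediateField.AdjoinSimple.gen K (θ n)} = ⊤ := by
    apply IntermediateField.lift_injective
    rw [IntermediateField.lift_adjoin_simple, IntermediateField.lift_top]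
    rfl
  have hgen (n : ℕ) (hn : 0 < n) : IntermediateField.AdjoinSimple.gen K (θ n) ^ p
      - IntermediateField.AdjoinSimple.gen K (θ n) = algebraMap K _ (a / d ^ (n * p)) :=
    Subtype.ext (hAS n hn)
  have hgen' (n : ℕ) (hn : 0 < n) : IntermediateField.AdjoinSimple.gen K (θ n) ∉
      Set.range (algebraMap K (IntermediateField.adjoin K {θ n})) := by
    rintro ⟨c, hc⟩
    exact hnot n hn ⟨c, congrArg Subtype.val hc⟩
  have hdist (m n : ℕ) (hm : 0 < m) (hmn : m < n) :
      IntermediateField.adjoin K {θ m} ≠ IntermediateField.adjoin K {θ n} := by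
    intro hE
    have hn : 0 < n := hm.trans hmn
    have hmem : θ n ∈ IntermediateField.adjoin K {θ m} := by
      rw [hE]; exact IntermediateField.mem_adjoin_simple_self K (θ n)
    obtain ⟨k, c, hk, hkc⟩ := exists_eq_mul_add (K := K) p
      (θ' := (⟨θ n, hmem⟩ : IntermediateField.adjoin K {θ m})) (hgen m hm)
      (Subtype.ext (hAS n hn)) (htop m) (hgen' m hm)
    have hkc' : θ n = algebraMap K Ω k * θ m + algebraMap K Ω c := congrArg Subtype.val hkc
    have hvk : v (algebraMap K Ω k) ≤ 1 :=
      map_le_one_of_pow_eq_self v p (by rw [← map_pow, hk])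
    obtain ⟨r, rfl⟩ : ∃ r, n = r + 1 + m := ⟨n - m - 1, by omega⟩
    have h := heq (r + 1 + m) hn (k * d ^ (r + 1) * c₀ + d ^ (r + 1 + m) * c)
    have hexp : δ ^ (r + 1 + m) * θ (r + 1 + m)
        - algebraMap K Ω (k * d ^ (r + 1) * c₀ + d ^ (r + 1 + m) * c)
        = algebraMap K Ω k * δ ^ r * (δ * (δ ^ m * θ m - algebraMap K Ω c₀)) := by
      simp only [map_add, map_mul, map_pow, ← hδdef]
      rw [hkc']
      ring
    have hlt := hαd (k * d ^ (r + 1) * c₀ + d ^ (r + 1 + m) * c)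
    rw [← h, hexp, map_mul v, map_mul v δ, heq m hm, mul_comm (v δ)] at hlt
    refine hlt.not_ge (mul_le_of_le_one_left' ?_)
    rw [map_mul, map_pow]
    exact mul_le_one' hvk (pow_le_one' hδ1.le r)
  refine ⟨hnot, fun m n hm hn hE ↦ ?_, fun n hn ↦ ?_⟩
  · rcases lt_trichotomy m n with h | h | h
    · exact absurd hE (hdist m n hm h)
    · exact h
    · exact absurd hE.symm (hdist n m hn h)
  · obtain ⟨_, _⟩ := isGalois_of_artinSchreier p (hgen n hn) (htop n)
    have hcard := card_gal_of_artinSchreier p (hgen n hn) (htop n) (hgen' n hn)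
    refine uniqueExtension_of_invariant _ (map_eq_of_conjugates_close _ (hcard ▸ hp)
      (x := algebraMap K _ d ^ n * IntermediateField.AdjoinSimple.gen K (θ n))
      (ε := v δ ^ n) (fun h ↦ ?_) fun c ↦ ?_)
    · have ht := sub_pow_eq_self p (hgen n hn) h
      have ht1 := map_le_one_of_pow_eq_self v p (congrArg Subtype.val ht)
      rw [map_mul, map_pow, AlgEquiv.commutes, ← mul_sub, map_mul, map_pow]
      exact mul_le_of_le_one_right' ht1
    · exact (pow_le_of_le_one zero_le hδ1.le hn.ne').trans_lt
        ((hδc c).trans_eq (heq n hn c).symm)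

end Statement16
end
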